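/- Fix d ≥ 2. For every n ∈ ℕ₊, every bounded convex open set Ω ⊆ ℝ^d and every α > 0, N^D_Ω(α) ≥ (n|Ω|/(λ*_n + n^{−1})^{d/2}) α^{d/2} − (2n√d |∂Ω|/(λ*_n + n^{−1})^{(d−1)/2}) α^{(d−1)/2}, where λ*_n denotes the n-th Dirichlet eigenvalue of the d-dimensional unit cube. -/

import Mathlib

/-!
The theorem counts eigenvalues of `Ω` by placing disjoint cubes inside it.

*Analysis.* If `φ₁, …, φ_N ∈ C_c^∞(Ω)` span a space on which `∫ ‖∇u‖² ≤ β ∫ u²` and `∫ u² > 0` for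
`u ≠ 0`, then `λ_k(Ω) ≤ β` for all `k ≤ N` (`dirichletEig_le`). On the unit cube such functions are
products of truncated sines: as the truncation is removed, their Gram and stiffness matrices tend
to the diagonal matrices of the true eigenfunctions, so for every `β > λ*_n` some truncation of the
first `n` eigenfunctions works (`exists_unit_family`, `exists_cube_modes`). Copies of this family in
disjoint cubes of side `ℓ` inside `Ω` are mutually orthogonal, both in `L²` and in the Dirichlet
form, and scaling multiplies the Rayleigh quotient by `ℓ⁻²`. Hence `M` disjoint cubes produce `n M`
eigenvalues below `α` whenever `β / ℓ² < α` (`cubes_le_encard`). The choice `ℓ² = (λ*_n + 1/n) / α`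
leaves room for such a `β`.

*Geometry.* It remains to find `M ≥ (|Ω| - 2 √d ℓ |∂Ω|) / ℓ^d` disjoint cubes of side `ℓ` in `Ω`
(`exists_grid`). Let `B` be any set of points `x` such that `x + [0, ℓ]^d ⊆ Ω`. Averaging over
translates of the lattice `ℓ ℤ^d`, some translate has at least
`|B| / ℓ^d` points in `B` (`exists_lattice_translate`). A suitable `B` comes from eroding `Ω`
successively along the coordinate axes; by Fubini and convexity the erosion along the `j`-th axis
costs at most `ℓ` times the volume of the shadow of `Ω` in that direction (`exists_erosion`).

Twice the volume of a shadow is bounded by `κ |∂Ω|`, because the upper and the lower half of the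
boundary are disjoint and both project onto the shadow (`two_mul_volume_shadow_le`). The constant
`κ` reflects that the Hausdorff measure of Mathlib is built from `diam ^ m`, `m = d - 1`, without
the factor that makes it agree with Euclidean volume. Comparison through the sup norm, for which
Hausdorff and Lebesgue measure do agree, gives `κ = 1`; comparison with Euclidean balls gives
`κ = ω_m`, the volume of the unit ball. The sum over the `d` axes is at most `2 √d |∂Ω|` as soon as
`√d κ ≤ 4`, which holds for `κ = 1` if `d ≤ 16`, and for `κ = ω_m` if `m ≥ 16`
(`sum_volume_shadow_le`). Finally `|∂Ω|` is finite, so that no information is lost in passing to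
real numbers (`hausdorffMeasure_frontier_lt_top`).
-/

open MeasureTheory

/-- The Rayleigh quotient of `u` on `Ω`. -/
noncomputable def rayleighQuot (d : ℕ) (Ω : Set (EuclideanSpace ℝ (Fin d)))
    (u : EuclideanSpace ℝ (Fin d) → ℝ) : ℝ :=
  (∫ x in Ω, ‖fderiv ℝ u x‖ ^ 2) / (∫ x in Ω, (u x) ^ 2)

/-- The `k`-th Dirichlet eigenvalue of `Ω` via the Courant–Fischer variational formula:
the infimum over `k`-dimensional subspaces of `C_c^∞(Ω)` (smooth functions with compact
support contained in `Ω`), of the supremum of the Rayleigh quotient over nonzero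
elements. -/
noncomputable def dirichletEig (d k : ℕ) (Ω : Set (EuclideanSpace ℝ (Fin d))) : ℝ :=
  ⨅ φ : {φ : Fin k → EuclideanSpace ℝ (Fin d) → ℝ //
      (∀ i, ContDiff ℝ (⊤ : ℕ∞) (φ i) ∧ HasCompactSupport (φ i) ∧ tsupport (φ i) ⊆ Ω) ∧
      LinearIndependent ℝ φ},
    ⨆ c : {c : Fin k → ℝ // c ≠ 0},
      rayleighQuot d Ω (fun x => ∑ i, c.1 i * φ.1 i x)

/-- The `n`-th (1-indexed) Dirichlet eigenvalue of the `d`-dimensional unit cube: the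
`n`-th smallest element, counted with multiplicity, of `{π²(m₁² + ⋯ + m_d²) : mᵢ ∈ ℕ₊}`. -/
noncomputable def cubeDirichletEig (d n : ℕ) : ℝ :=
  sInf {t : ℝ | (n : ℕ∞) ≤
    {m : Fin d → ℕ+ | Real.pi ^ 2 * ∑ j : Fin d, ((m j : ℕ) : ℝ) ^ 2 ≤ t}.encard}

open Filter Topology

/-! ### Upper bounds for Dirichlet eigenvalues -/

theorem rayleighQuot_nonneg (d : ℕ) (Ω : Set (EuclideanSpace ℝ (Fin d)))
    (u : EuclideanSpace ℝ (Fin d) → ℝ) : 0 ≤ rayleighQuot d Ω u :=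
  div_nonneg (integral_nonneg fun _ => by positivity) (integral_nonneg fun _ => by positivity)

/-- Any `k` of the functions `φ i` are admissible in the variational formula for `λ_k(Ω)`: `hpos`
makes them linearly independent, and `hR` bounds the Rayleigh quotient on their span. -/
theorem dirichletEig_le {d : ℕ} {Ω : Set (EuclideanSpace ℝ (Fin d))} {ι : Type*} [Fintype ι]
    (φ : ι → EuclideanSpace ℝ (Fin d) → ℝ)
    (hφ : ∀ i, ContDiff ℝ (⊤ : ℕ∞) (φ i) ∧ HasCompactSupport (φ i) ∧ tsupport (φ i) ⊆ Ω)
    {β : ℝ} (hβ : 0 ≤ β)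
    (hpos : ∀ c : ι → ℝ, c ≠ 0 → 0 < ∫ x in Ω, (∑ i, c i * φ i x) ^ 2)
    (hR : ∀ c : ι → ℝ, ∫ x in Ω, ‖fderiv ℝ (fun x => ∑ i, c i * φ i x) x‖ ^ 2 ≤
      β * ∫ x in Ω, (∑ i, c i * φ i x) ^ 2)
    {k : ℕ} (hk : k ≤ Fintype.card ι) : dirichletEig d k Ω ≤ β := by
  classical
  obtain ⟨e⟩ : Nonempty (Fin k ↪ ι) := by
    rw [Function.Embedding.nonempty_iff_card_le]; simpa using hk
  -- extending coefficients by zero identifies combinations of the subfamily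
  -- with combinations of the full family
  have hext : ∀ c : Fin k → ℝ, ∃ c' : ι → ℝ, (c ≠ 0 → c' ≠ 0) ∧
      ∀ x, ∑ i, c' i * φ i x = ∑ i, c i * φ (e i) x := by
    intro c
    refine ⟨Function.extend e c 0, ?_, ?_⟩
    · intro hc h0
      apply hc
      funext i
      have := congrFun h0 (e i)
      rwa [e.injective.extend_apply] at this
    · intro x
      have h1 : ∑ i, c i * φ (e i) x
          = ∑ j ∈ Finset.univ.map e, Function.extend e c 0 j * φ j x := by
        rw [Finset.sum_map]
        simp [e.injective.extend_apply]
      rw [h1]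
      symm
      apply Finset.sum_subset (Finset.subset_univ _)
      intro j _ hj
      rw [Function.extend_apply']
      · simp
      · rintro ⟨i, rfl⟩
        exact hj (by simp)
  have hlin : LinearIndependent ℝ (fun i => φ (e i)) := by
    rw [Fintype.linearIndependent_iff]
    intro c hc
    by_contra! hne
    obtain ⟨i, hi⟩ := hne
    obtain ⟨c', hc', hs⟩ := hext c
    have h2 := hpos c' (hc' fun h => hi (by simp [h]))
    have h3 : ∀ x, ∑ i, c i * φ (e i) x = 0 := fun x => by
      have := congrFun hc x
      simpa using this
    simp [hs, h3] at h2
  unfold dirichletEig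
  refine (ciInf_le ⟨0, ?_⟩ ⟨fun i => φ (e i), fun i => hφ _, hlin⟩).trans ?_
  · rintro _ ⟨_, rfl⟩
    exact Real.iSup_nonneg fun c => rayleighQuot_nonneg _ _ _
  · refine Real.iSup_le (fun c => ?_) hβ
    obtain ⟨c', hc', hs⟩ := hext c.1
    have h1 := hR c'
    have h2 := hpos c' (hc' c.2)
    simp only [hs] at h1 h2
    unfold rayleighQuot
    rw [div_le_iff₀ h2]
    exact h1

/-! ### Truncated sines on the unit interval -/

/-- The truncated sine: `x ↦ sin (π k x)` multiplied by a smooth cutoff which vanishes outside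
`(1/a, 1 - 1/a)` and equals `1` on `[2/a, 1 - 2/a]`. -/
noncomputable def cutSin (a : ℝ) (k : ℕ) (x : ℝ) : ℝ :=
  Real.smoothTransition (a * x - 1) * Real.smoothTransition (a * (1 - x) - 1) *
    Real.sin (Real.pi * k * x)

theorem cutSin_contDiff (a : ℝ) (k : ℕ) : ContDiff ℝ (⊤ : ℕ∞) (cutSin a k) := by
  unfold cutSin
  have h1 : ContDiff ℝ (⊤ : ℕ∞) fun x : ℝ => Real.smoothTransition (a * x - 1) :=
    Real.smoothTransition.contDiff.comp (by fun_prop)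
  have h2 : ContDiff ℝ (⊤ : ℕ∞) fun x : ℝ => Real.smoothTransition (a * (1 - x) - 1) :=
    Real.smoothTransition.contDiff.comp (by fun_prop)
  have h3 : ContDiff ℝ (⊤ : ℕ∞) fun x : ℝ => Real.sin (Real.pi * k * x) :=
    Real.contDiff_sin.comp (by fun_prop)
  exact (h1.mul h2).mul h3

theorem cutSin_tsupport {a : ℝ} (ha : 0 < a) (k : ℕ) : tsupport (cutSin a k) ⊆ Set.Ioo 0 1 := by
  have h : tsupport (cutSin a k) ⊆ Set.Icc (1 / a) (1 - 1 / a) := by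
    apply closure_minimal _ isClosed_Icc
    intro x hx
    by_contra hx'
    apply hx
    rw [Set.mem_Icc, not_and_or, not_le, not_le] at hx'
    unfold cutSin
    rcases hx' with h | h
    · rw [lt_div_iff₀ ha] at h
      rw [Real.smoothTransition.zero_of_nonpos (by linarith)]; simp
    · have h' : 1 - x < 1 / a := by linarith
      rw [lt_div_iff₀ ha] at h'
      rw [Real.smoothTransition.zero_of_nonpos (x := a * (1 - x) - 1) (by linarith)]; simp
  intro x hx
  have h1 := h hx
  have h2 : 0 < 1 / a := by positivity
  exact ⟨by linarith [h1.1], by linarith [h1.2]⟩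

theorem hasDerivAt_cutSin (a : ℝ) (k : ℕ) (x : ℝ) :
    HasDerivAt (cutSin a k)
      ((deriv Real.smoothTransition (a * x - 1) * a * Real.smoothTransition (a * (1 - x) - 1) +
        Real.smoothTransition (a * x - 1) * (deriv Real.smoothTransition (a * (1 - x) - 1) * (-a)))
          * Real.sin (Real.pi * k * x) +
        Real.smoothTransition (a * x - 1) * Real.smoothTransition (a * (1 - x) - 1) *
          (Real.cos (Real.pi * k * x) * (Real.pi * k))) x := by
  have hT : ∀ y, HasDerivAt Real.smoothTransition (deriv Real.smoothTransition y) y := fun y =>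
    ((Real.smoothTransition.contDiff (n := 1)).differentiable (by simp) y).hasDerivAt
  have l1 : HasDerivAt (fun x : ℝ => a * x - 1) a x := by
    simpa using ((hasDerivAt_id x).const_mul a).sub_const 1
  have l2 : HasDerivAt (fun x : ℝ => a * (1 - x) - 1) (-a) x := by
    simpa using (((hasDerivAt_id x).const_sub 1).const_mul a).sub_const 1
  have l3 : HasDerivAt (fun x : ℝ => Real.pi * k * x) (Real.pi * k) x := by
    simpa using (hasDerivAt_id x).const_mul (Real.pi * k)
  have h1 := (hT (a * x - 1)).comp x l1
  have h2 := (hT (a * (1 - x) - 1)).comp x l2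
  have h3 := (Real.hasDerivAt_sin (Real.pi * k * x)).comp x l3
  exact (h1.mul h2).mul h3

theorem deriv_smoothTransition_of_one_lt {y : ℝ} (hy : 1 < y) :
    deriv Real.smoothTransition y = 0 := by
  have : Real.smoothTransition =ᶠ[𝓝 y] fun _ => 1 := by
    filter_upwards [lt_mem_nhds hy] with z hz
    exact Real.smoothTransition.one_of_one_le hz.le
  rw [this.deriv_eq]; simp

theorem deriv_smoothTransition_of_neg {y : ℝ} (hy : y < 0) :
    deriv Real.smoothTransition y = 0 := by
  have : Real.smoothTransition =ᶠ[𝓝 y] fun _ => 0 := by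
    filter_upwards [gt_mem_nhds hy] with z hz
    exact Real.smoothTransition.zero_of_nonpos hz.le
  rw [this.deriv_eq]; simp

/-- This bound absorbs the factor `a` from differentiating the cutoff, since the sine vanishes
linearly at both endpoints. -/
theorem exists_bound_deriv_smoothTransition :
    ∃ C : ℝ, 0 ≤ C ∧ ∀ y, |deriv Real.smoothTransition y| * |y + 1| ≤ C := by
  have hcont : Continuous fun y : ℝ => deriv Real.smoothTransition y * (y + 1) :=
    ((Real.smoothTransition.contDiff (n := 1)).continuous_deriv (by simp)).mul (by fun_prop)
  have hsupp : HasCompactSupport fun y : ℝ => deriv Real.smoothTransition y * (y + 1) := by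
    apply HasCompactSupport.intro (isCompact_Icc (a := (0 : ℝ)) (b := 1))
    intro x hx
    rw [Set.mem_Icc, not_and_or, not_le, not_le] at hx
    rcases hx with h | h
    · simp [deriv_smoothTransition_of_neg h]
    · simp [deriv_smoothTransition_of_one_lt h]
  obtain ⟨C, hC⟩ := hsupp.exists_bound_of_continuous hcont
  exact ⟨C, (norm_nonneg _).trans (hC 0), fun y => by simpa [abs_mul] using hC y⟩

theorem abs_cutSin_le (a : ℝ) (k : ℕ) (x : ℝ) : |cutSin a k x| ≤ 1 := by
  unfold cutSin
  rw [abs_mul, abs_mul, abs_of_nonneg (Real.smoothTransition.nonneg _),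
    abs_of_nonneg (Real.smoothTransition.nonneg _)]
  have h1 := Real.smoothTransition.le_one (a * x - 1)
  have h2 := Real.smoothTransition.le_one (a * (1 - x) - 1)
  have h3 := Real.smoothTransition.nonneg (a * x - 1)
  have h4 := Real.smoothTransition.nonneg (a * (1 - x) - 1)
  exact mul_le_one₀ (mul_le_one₀ h1 h4 h2) (abs_nonneg _) (Real.abs_sin_le_one _)

/-- The bound is uniform in the truncation parameter `a`: the derivative of a cutoff factor is of
order `a`, but is supported within `2 / a` of an endpoint of `[0, 1]`, where the sine is of order
`1 / a`. -/
theorem exists_bound_deriv_cutSin (k : ℕ) :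
    ∃ C : ℝ, ∀ a : ℝ, 0 < a → ∀ x, |deriv (cutSin a k) x| ≤ C := by
  obtain ⟨C, hC0, hC⟩ := exists_bound_deriv_smoothTransition
  refine ⟨(C + C + 1) * (Real.pi * k), fun a ha x => ?_⟩
  rw [(hasDerivAt_cutSin a k x).deriv]
  have hpk : 0 ≤ Real.pi * k := by positivity
  have s1 : |Real.sin (Real.pi * k * x)| ≤ Real.pi * k * |x| := by
    refine Real.abs_sin_le_abs.trans ?_
    rw [abs_mul, abs_of_nonneg hpk]
  have s2 : |Real.sin (Real.pi * k * x)| ≤ Real.pi * k * |1 - x| := by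
    have : Real.sin (Real.pi * k * (1 - x)) = - (-1) ^ k * Real.sin (Real.pi * k * x) := by
      rw [show Real.pi * k * (1 - x) = k * Real.pi - Real.pi * k * x by ring,
        Real.sin_nat_mul_pi_sub]; ring
    have h2 : |Real.sin (Real.pi * k * x)| = |Real.sin (Real.pi * k * (1 - x))| := by
      rw [this, abs_mul]; simp
    rw [h2]
    refine Real.abs_sin_le_abs.trans ?_
    rw [abs_mul, abs_of_nonneg hpk]
  have c1 := hC (a * x - 1)
  have c2 := hC (a * (1 - x) - 1)
  rw [sub_add_cancel, abs_mul, abs_of_pos ha] at c1 c2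
  have n1 := Real.smoothTransition.nonneg (a * x - 1)
  have n2 := Real.smoothTransition.nonneg (a * (1 - x) - 1)
  have m1 := Real.smoothTransition.le_one (a * x - 1)
  have m2 := Real.smoothTransition.le_one (a * (1 - x) - 1)
  generalize Real.smoothTransition (a * x - 1) = T1 at *
  generalize Real.smoothTransition (a * (1 - x) - 1) = T2 at *
  generalize deriv Real.smoothTransition (a * x - 1) = D1 at *
  generalize deriv Real.smoothTransition (a * (1 - x) - 1) = D2 at *
  have e1 : |D1 * a * T2 * Real.sin (Real.pi * k * x)| ≤ C * (Real.pi * k) := by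
    rw [abs_mul, abs_mul, abs_mul, abs_of_pos ha, abs_of_nonneg n2]
    calc |D1| * a * T2 * |Real.sin (Real.pi * k * x)|
        ≤ |D1| * a * 1 * (Real.pi * k * |x|) := by gcongr
      _ = (|D1| * (a * |x|)) * (Real.pi * k) := by ring
      _ ≤ _ := by gcongr
  have e2 : |T1 * (D2 * (-a)) * Real.sin (Real.pi * k * x)| ≤ C * (Real.pi * k) := by
    rw [abs_mul, abs_mul, abs_mul, abs_neg, abs_of_pos ha, abs_of_nonneg n1]
    calc T1 * (|D2| * a) * |Real.sin (Real.pi * k * x)|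
        ≤ 1 * (|D2| * a) * (Real.pi * k * |1 - x|) := by gcongr
      _ = (|D2| * (a * |1 - x|)) * (Real.pi * k) := by ring
      _ ≤ _ := by gcongr
  have e3 : |T1 * T2 * (Real.cos (Real.pi * k * x) * (Real.pi * k))| ≤ 1 * (Real.pi * k) := by
    rw [abs_mul, abs_mul, abs_mul, abs_of_nonneg n1, abs_of_nonneg n2, abs_of_nonneg hpk]
    calc T1 * T2 * (|Real.cos (Real.pi * k * x)| * (Real.pi * k))
        ≤ 1 * 1 * (1 * (Real.pi * k)) := by
          gcongr
          exact Real.abs_cos_le_one _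
      _ = _ := by ring
  rw [add_mul (D1 * a * T2)]
  refine (abs_add_three _ _ _).trans ?_
  linarith

theorem eventually_cutSin {x : ℝ} (hx : x ∈ Set.Ioo (0 : ℝ) 1) (k : ℕ) :
    ∀ᶠ a : ℝ in atTop, cutSin a k x = Real.sin (Real.pi * k * x) ∧
      deriv (cutSin a k) x = Real.pi * k * Real.cos (Real.pi * k * x) := by
  have h0 : 0 < 1 - x := by linarith [hx.2]
  filter_upwards [eventually_gt_atTop (2 / x), eventually_gt_atTop (2 / (1 - x))] with a h1 h2
  rw [div_lt_iff₀ hx.1] at h1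
  rw [div_lt_iff₀ h0] at h2
  rw [(hasDerivAt_cutSin a k x).deriv, deriv_smoothTransition_of_one_lt (y := a * x - 1)
    (by linarith), deriv_smoothTransition_of_one_lt (y := a * (1 - x) - 1) (by linarith)]
  unfold cutSin
  rw [Real.smoothTransition.one_of_one_le (x := a * x - 1) (by linarith),
    Real.smoothTransition.one_of_one_le (x := a * (1 - x) - 1) (by linarith)]
  constructor <;> ring

theorem integral_cos_pi_mul (j : ℤ) :
    ∫ x in (0 : ℝ)..1, Real.cos (Real.pi * j * x) = if j = 0 then 1 else 0 := by
  split_ifs with h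
  · simp [h]
  · have hj : Real.pi * j ≠ 0 := mul_ne_zero Real.pi_ne_zero (by exact_mod_cast h)
    rw [intervalIntegral.integral_comp_mul_left (fun y => Real.cos y) hj, integral_cos]
    rw [mul_one, mul_comm Real.pi, Real.sin_int_mul_pi]
    simp

theorem integral_sin_sin {k l : ℕ} (hk : 0 < k) :
    ∫ x in (0 : ℝ)..1, Real.sin (Real.pi * k * x) * Real.sin (Real.pi * l * x)
      = if k = l then 1 / 2 else 0 := by
  have h : ∀ x : ℝ, Real.sin (Real.pi * k * x) * Real.sin (Real.pi * l * x) =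
      (1 / 2) * (Real.cos (Real.pi * ((k - l : ℤ) : ℤ) * x) -
        Real.cos (Real.pi * ((k + l : ℤ) : ℤ) * x)) := by
    intro x
    push_cast
    rw [show Real.pi * ((k : ℝ) - l) * x = Real.pi * k * x - Real.pi * l * x by ring,
      show Real.pi * ((k : ℝ) + l) * x = Real.pi * k * x + Real.pi * l * x by ring,
      Real.cos_sub, Real.cos_add]
    ring
  simp_rw [h]
  rw [intervalIntegral.integral_const_mul, intervalIntegral.integral_sub
    ((by fun_prop : Continuous _).intervalIntegrable _ _)
    ((by fun_prop : Continuous _).intervalIntegrable _ _), integral_cos_pi_mul,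
    integral_cos_pi_mul]
  have h2 : (k + l : ℤ) ≠ 0 := by omega
  by_cases hkl : k = l
  · simp [hkl] at h2 ⊢; simp [h2]
  · have : (k - l : ℤ) ≠ 0 := by omega
    simp [hkl, h2, this]

theorem integral_cos_cos {k l : ℕ} (hk : 0 < k) :
    ∫ x in (0 : ℝ)..1, Real.cos (Real.pi * k * x) * Real.cos (Real.pi * l * x)
      = if k = l then 1 / 2 else 0 := by
  have h : ∀ x : ℝ, Real.cos (Real.pi * k * x) * Real.cos (Real.pi * l * x) =
      (1 / 2) * (Real.cos (Real.pi * ((k - l : ℤ) : ℤ) * x) +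
        Real.cos (Real.pi * ((k + l : ℤ) : ℤ) * x)) := by
    intro x
    push_cast
    rw [show Real.pi * ((k : ℝ) - l) * x = Real.pi * k * x - Real.pi * l * x by ring,
      show Real.pi * ((k : ℝ) + l) * x = Real.pi * k * x + Real.pi * l * x by ring,
      Real.cos_sub, Real.cos_add]
    ring
  simp_rw [h]
  rw [intervalIntegral.integral_const_mul, intervalIntegral.integral_add
    ((by fun_prop : Continuous _).intervalIntegrable _ _)
    ((by fun_prop : Continuous _).intervalIntegrable _ _), integral_cos_pi_mul,
    integral_cos_pi_mul]
  have h2 : (k + l : ℤ) ≠ 0 := by omega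
  by_cases hkl : k = l
  · simp [hkl] at h2 ⊢; simp [h2]
  · have : (k - l : ℤ) ≠ 0 := by omega
    simp [hkl, h2, this]

/-- Dominated convergence on `(0, 1)`, for families that are eventually equal to their limit at each
point. -/
theorem tendsto_integral_of_bounded_Ioo {F : ℝ → ℝ → ℝ} {f : ℝ → ℝ} {C : ℝ}
    (hc : ∀ a, Continuous (F a)) (h0 : ∀ a, 0 < a → ∀ x, x ∉ Set.Ioo (0 : ℝ) 1 → F a x = 0)
    (hb : ∀ a, 0 < a → ∀ x, |F a x| ≤ C)
    (hl : ∀ x ∈ Set.Ioo (0 : ℝ) 1, ∀ᶠ a in atTop, F a x = f x) :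
    Tendsto (fun a => ∫ x, F a x) atTop (𝓝 (∫ x in (0 : ℝ)..1, f x)) := by
  rw [intervalIntegral.integral_of_le zero_le_one, integral_Ioc_eq_integral_Ioo]
  have h1 : ∀ᶠ a : ℝ in atTop, ∫ x in Set.Ioo (0 : ℝ) 1, F a x = ∫ x, F a x := by
    filter_upwards [eventually_gt_atTop 0] with a ha
    exact setIntegral_eq_integral_of_forall_compl_eq_zero fun x hx => h0 a ha x hx
  refine Tendsto.congr' h1 ?_
  refine tendsto_integral_filter_of_dominated_convergence (fun _ => C) ?_ ?_ ?_ ?_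
  · exact Eventually.of_forall fun a => (hc a).aestronglyMeasurable
  · filter_upwards [eventually_gt_atTop 0] with a ha
    exact Eventually.of_forall fun x => hb a ha x
  · exact integrable_const C
  · filter_upwards [ae_restrict_mem measurableSet_Ioo] with x hx
    exact tendsto_const_nhds.congr' ((hl x hx).mono fun a h => h.symm)

theorem cutSin_eq_zero {a : ℝ} (ha : 0 < a) (k : ℕ) {x : ℝ} (hx : x ∉ Set.Ioo (0 : ℝ) 1) :
    cutSin a k x = 0 :=
  image_eq_zero_of_notMem_tsupport fun h => hx (cutSin_tsupport ha k h)

/-- The one-dimensional Gram matrix tends to that of the functions `sin (π k x)`. -/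
theorem tendsto_gram {k l : ℕ} (hk : 0 < k) :
    Tendsto (fun a => ∫ x, cutSin a k x * cutSin a l x) atTop
      (𝓝 (if k = l then 1 / 2 else 0)) := by
  rw [← integral_sin_sin hk]
  refine tendsto_integral_of_bounded_Ioo (C := 1) ?_ ?_ ?_ ?_
  · exact fun a => (cutSin_contDiff a k).continuous.mul (cutSin_contDiff a l).continuous
  · intro a ha x hx
    simp [cutSin_eq_zero ha k hx]
  · intro a _ x
    rw [abs_mul]
    exact mul_le_one₀ (abs_cutSin_le _ _ _) (abs_nonneg _) (abs_cutSin_le _ _ _)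
  · intro x hx
    filter_upwards [eventually_cutSin hx k, eventually_cutSin hx l] with a h1 h2
    rw [h1.1, h2.1]

/-- The one-dimensional stiffness matrix tends to that of the functions `sin (π k x)`. -/
theorem tendsto_stiff {k l : ℕ} (hk : 0 < k) :
    Tendsto (fun a => ∫ x, deriv (cutSin a k) x * deriv (cutSin a l) x) atTop
      (𝓝 (if k = l then Real.pi ^ 2 * (k : ℝ) ^ 2 / 2 else 0)) := by
  obtain ⟨C, hC⟩ := exists_bound_deriv_cutSin k
  obtain ⟨C', hC'⟩ := exists_bound_deriv_cutSin l
  have e : (if k = l then Real.pi ^ 2 * (k : ℝ) ^ 2 / 2 else 0) =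
      ∫ x in (0 : ℝ)..1, (Real.pi * k * (Real.pi * l)) *
        (Real.cos (Real.pi * k * x) * Real.cos (Real.pi * l * x)) := by
    rw [intervalIntegral.integral_const_mul, integral_cos_cos hk]
    split_ifs with h
    · rw [h]; ring
    · ring
  rw [e]
  refine tendsto_integral_of_bounded_Ioo (C := C * C') ?_ ?_ ?_ ?_
  · exact fun a => ((cutSin_contDiff a k).continuous_deriv (by simp)).mul
      ((cutSin_contDiff a l).continuous_deriv (by simp))
  · intro a ha x hx
    have : deriv (cutSin a k) x = 0 := by
      by_contra h
      exact hx (cutSin_tsupport ha k (support_deriv_subset h))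
    simp [this]
  · intro a ha x
    rw [abs_mul]
    exact mul_le_mul (hC a ha x) (hC' a ha x) (abs_nonneg _) ((abs_nonneg _).trans (hC a ha x))
  · intro x hx
    filter_upwards [eventually_cutSin hx k, eventually_cutSin hx l] with a h1 h2
    rw [h1.2, h2.2]; ring

/-! ### Test functions on the unit cube -/

/-- Matrices that tend entrywise to a positive diagonal matrix are eventually positive definite. -/
theorem eventually_quadForm_pos {ι : Type*} [Fintype ι] [DecidableEq ι] {T : ℝ → ι → ι → ℝ}
    {D : ι → ℝ} (hD : ∀ i, 0 < D i)
    (hT : ∀ i j, Tendsto (fun a => T a i j) atTop (𝓝 (if i = j then D i else 0))) :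
    ∀ᶠ a in atTop, ∀ c : ι → ℝ, c ≠ 0 → 0 < ∑ i, ∑ j, c i * c j * T a i j := by
  obtain ⟨τ, hτ, hτD⟩ : ∃ τ : ℝ, 0 < τ ∧ ∀ i, τ ≤ D i := by
    rcases isEmpty_or_nonempty ι with h | h
    · exact ⟨1, one_pos, fun i => h.elim i⟩
    · obtain ⟨i, hi⟩ := Finite.exists_min D
      exact ⟨D i, hD i, hi⟩
  set ε : ℝ := τ / (Fintype.card ι + 1) with hε
  have hε0 : 0 < ε := by positivity
  have hev : ∀ᶠ a in atTop, ∀ i j, |T a i j - (if i = j then D i else 0)| < ε := by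
    rw [eventually_all]; intro i
    rw [eventually_all]; intro j
    exact (hT i j).eventually (Metric.ball_mem_nhds _ hε0)
  filter_upwards [hev] with a ha c hc
  have hcs : 0 < ∑ i, c i ^ 2 := by
    obtain ⟨i, hi⟩ := Function.ne_iff.1 hc
    exact Finset.sum_pos' (fun i _ => sq_nonneg _) ⟨i, Finset.mem_univ _, by
      have : c i ≠ 0 := hi
      positivity⟩
  have h1 : ∑ i, ∑ j, c i * c j * T a i j = ∑ i, D i * c i ^ 2 +
      ∑ i, ∑ j, c i * c j * (T a i j - (if i = j then D i else 0)) := by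
    rw [← Finset.sum_add_distrib]
    refine Finset.sum_congr rfl fun i _ => ?_
    have : D i * c i ^ 2 = ∑ j, c i * c j * (if i = j then D i else 0) := by
      simp; ring
    rw [this, ← Finset.sum_add_distrib]
    exact Finset.sum_congr rfl fun j _ => by ring
  have h2 : τ * ∑ i, c i ^ 2 ≤ ∑ i, D i * c i ^ 2 := by
    rw [Finset.mul_sum]
    exact Finset.sum_le_sum fun i _ => mul_le_mul_of_nonneg_right (hτD i) (sq_nonneg _)
  have h3 : |∑ i, ∑ j, c i * c j * (T a i j - (if i = j then D i else 0))|
      ≤ ε * (Fintype.card ι * ∑ i, c i ^ 2) := by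
    calc _ ≤ ∑ i, ∑ j, |c i * c j * (T a i j - (if i = j then D i else 0))| :=
          (Finset.abs_sum_le_sum_abs _ _).trans
            (Finset.sum_le_sum fun i _ => Finset.abs_sum_le_sum_abs _ _)
      _ ≤ ∑ i, ∑ j, |c i| * |c j| * ε := by
          refine Finset.sum_le_sum fun i _ => Finset.sum_le_sum fun j _ => ?_
          rw [abs_mul, abs_mul]
          exact mul_le_mul_of_nonneg_left (ha i j).le (by positivity)
      _ = ε * (∑ i, |c i|) ^ 2 := by
          rw [sq, Finset.sum_mul_sum, Finset.mul_sum]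
          refine Finset.sum_congr rfl fun i _ => ?_
          rw [Finset.mul_sum]
          exact Finset.sum_congr rfl fun j _ => by ring
      _ ≤ _ := by
          gcongr
          have := sq_sum_le_card_mul_sum_sq (s := Finset.univ) (f := fun i => |c i|)
          simpa using this
  have h4 : ε * (Fintype.card ι * ∑ i, c i ^ 2) < τ * ∑ i, c i ^ 2 := by
    rw [← mul_assoc]
    refine mul_lt_mul_of_pos_right ?_ hcs
    rw [hε, div_mul_eq_mul_div, div_lt_iff₀ (by positivity)]
    nlinarith
  have h5 := (abs_le.1 h3).1
  rw [h1]
  linarith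

/-- The squared norm of the differential is the sum of the squared partial derivatives. -/
theorem norm_sq_clm {d : ℕ} (L : EuclideanSpace ℝ (Fin d) →L[ℝ] ℝ) :
    ‖L‖ ^ 2 = ∑ j, L (EuclideanSpace.single j 1) ^ 2 := by
  set v := (InnerProductSpace.toDual ℝ (EuclideanSpace ℝ (Fin d))).symm L with hv
  have h1 : ‖L‖ = ‖v‖ := by simp [hv]
  have h2 : ∀ j, L (EuclideanSpace.single j 1) = v j := by
    intro j
    rw [← InnerProductSpace.toDual_symm_apply (x := EuclideanSpace.single j 1) (y := L), ← hv,
      EuclideanSpace.inner_single_right]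
    simp
  rw [h1, EuclideanSpace.norm_sq_eq]
  simp [h2]

/-- Tensor products of truncated sines: compactly supported approximations of the Dirichlet
eigenfunctions `∏ⱼ sin (π mⱼ xⱼ)` of the unit cube. -/
noncomputable def prodCut {d : ℕ} (a : ℝ) (m : Fin d → ℕ) (x : EuclideanSpace ℝ (Fin d)) : ℝ :=
  ∏ j, cutSin a (m j) (x j)

theorem contDiff_prodCut {d : ℕ} (a : ℝ) (m : Fin d → ℕ) :
    ContDiff ℝ (⊤ : ℕ∞) (prodCut a m) := by
  unfold prodCut
  refine contDiff_prod fun j _ => ?_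
  exact (cutSin_contDiff a (m j)).comp (by fun_prop)

theorem tsupport_prodCut {d : ℕ} {a : ℝ} (ha : 0 < a) (m : Fin d → ℕ) :
    tsupport (prodCut a m) ⊆ {x | ∀ j, x j ∈ Set.Ioo (0 : ℝ) 1} := by
  have h : tsupport (prodCut a m) ⊆ {x | ∀ j, x j ∈ tsupport (cutSin a (m j))} := by
    apply closure_minimal
    · intro x hx j
      apply subset_tsupport
      intro h0
      exact hx (Finset.prod_eq_zero (Finset.mem_univ j) h0)
    · simp only [Set.ofPred_forall]
      exact isClosed_iInter fun j => (isClosed_tsupport _).preimage (by fun_prop)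
  exact fun x hx j => cutSin_tsupport ha _ (h hx j)

theorem hasCompactSupport_prodCut {d : ℕ} {a : ℝ} (ha : 0 < a) (m : Fin d → ℕ) :
    HasCompactSupport (prodCut a m) := by
  have hK : IsCompact ((WithLp.toLp 2 : (Fin d → ℝ) → EuclideanSpace ℝ (Fin d)) ''
      Set.pi Set.univ fun _ => Set.Icc (0 : ℝ) 1) :=
    (isCompact_univ_pi fun _ => isCompact_Icc).image (PiLp.continuous_toLp 2 _)
  refine HasCompactSupport.intro hK fun x hx => ?_
  by_contra h
  apply hx
  refine ⟨WithLp.ofLp x, fun j _ => ?_, rfl⟩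
  have := tsupport_prodCut ha m (subset_tsupport _ h) j
  exact Set.Ioo_subset_Icc_self this

theorem integral_euclidean_prod {d : ℕ} (f : Fin d → ℝ → ℝ) :
    ∫ x : EuclideanSpace ℝ (Fin d), ∏ j, f j (x j) = ∏ j, ∫ t, f j t := by
  rw [← integral_fintype_prod_volume_eq_prod, ← (PiLp.volume_preserving_toLp (Fin d)).integral_comp
    (MeasurableEquiv.toLp 2 (Fin d → ℝ)).measurableEmbedding]

theorem fderiv_prodCut {d : ℕ} (a : ℝ) (m : Fin d → ℕ) (x : EuclideanSpace ℝ (Fin d))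
    (i : Fin d) : fderiv ℝ (prodCut a m) x (EuclideanSpace.single i 1) =
      ∏ j, (if j = i then deriv (cutSin a (m j)) (x j) else cutSin a (m j) (x j)) := by
  have h1 : ∀ j, HasFDerivAt (fun x : EuclideanSpace ℝ (Fin d) => cutSin a (m j) (x j))
      (deriv (cutSin a (m j)) (x j) • (EuclideanSpace.proj j : EuclideanSpace ℝ (Fin d) →L[ℝ] ℝ))
      x := by
    intro j
    have h := ((cutSin_contDiff a (m j)).differentiable (by simp) (x j)).hasDerivAt
    exact h.comp_hasFDerivAt x (EuclideanSpace.proj j : EuclideanSpace ℝ (Fin d) →L[ℝ] ℝ).hasFDerivAt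
  have h2 := HasFDerivAt.finsetProd (u := Finset.univ) fun j _ => h1 j
  have h3 : fderiv ℝ (prodCut a m) x = _ := h2.fderiv
  rw [h3]
  simp only [FunLike.coe_sum, Finset.sum_apply, FunLike.coe_smul, Pi.smul_apply,
    EuclideanSpace.coe_proj, smul_eq_mul]
  rw [Finset.sum_eq_single i]
  · rw [← Finset.mul_prod_erase _ _ (Finset.mem_univ i)]
    simp only [if_true, PiLp.single_apply, mul_one]
    rw [mul_comm]
    congr 1
    refine Finset.prod_congr rfl fun j hj => ?_
    rw [if_neg (Finset.ne_of_mem_erase hj)]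
  · intro j _ hj
    simp [hj]
  · simp

theorem integral_prodCut_mul {d : ℕ} (a : ℝ) (m m' : Fin d → ℕ) :
    ∫ x, prodCut a m x * prodCut a m' x =
      ∏ j, ∫ t, cutSin a (m j) t * cutSin a (m' j) t := by
  unfold prodCut
  simp_rw [← Finset.prod_mul_distrib]
  exact integral_euclidean_prod fun j t => cutSin a (m j) t * cutSin a (m' j) t

/-- By Fubini, the `i`-th part of the stiffness matrix of the products factors into one-dimensional
stiffness and Gram entries. -/
theorem integral_fderiv_prodCut_mul {d : ℕ} (a : ℝ) (m m' : Fin d → ℕ) (i : Fin d) :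
    ∫ x, fderiv ℝ (prodCut a m) x (EuclideanSpace.single i 1) *
        fderiv ℝ (prodCut a m') x (EuclideanSpace.single i 1) =
      ∏ j, if j = i then ∫ t, deriv (cutSin a (m j)) t * deriv (cutSin a (m' j)) t
        else ∫ t, cutSin a (m j) t * cutSin a (m' j) t := by
  simp_rw [fderiv_prodCut, ← Finset.prod_mul_distrib]
  rw [integral_euclidean_prod fun j t =>
    (if j = i then deriv (cutSin a (m j)) t else cutSin a (m j) t) *
    (if j = i then deriv (cutSin a (m' j)) t else cutSin a (m' j) t)]
  refine Finset.prod_congr rfl fun j _ => ?_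
  split_ifs <;> rfl

theorem tendsto_gram_prodCut {d : ℕ} {m m' : Fin d → ℕ} (hm : ∀ j, 0 < m j) :
    Tendsto (fun a => ∫ x, prodCut a m x * prodCut a m' x) atTop
      (𝓝 (if m = m' then (1 / 2) ^ d else 0)) := by
  simp_rw [integral_prodCut_mul]
  have h := tendsto_finsetProd (Finset.univ : Finset (Fin d))
    fun j _ => tendsto_gram (l := m' j) (hm j)
  convert h using 2
  split_ifs with hmm
  · simp [hmm]
  · obtain ⟨j, hj⟩ := Function.ne_iff.1 hmm
    exact (Finset.prod_eq_zero (Finset.mem_univ j) (by simp [hj])).symm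

theorem tendsto_stiff_prodCut {d : ℕ} {m m' : Fin d → ℕ} (hm : ∀ j, 0 < m j) :
    Tendsto (fun a => ∑ i, ∫ x, fderiv ℝ (prodCut a m) x (EuclideanSpace.single i 1) *
        fderiv ℝ (prodCut a m') x (EuclideanSpace.single i 1)) atTop
      (𝓝 (if m = m' then (1 / 2) ^ d * (Real.pi ^ 2 * ∑ j, (m j : ℝ) ^ 2) else 0)) := by
  have h : Tendsto (fun a => ∑ i, ∫ x, fderiv ℝ (prodCut a m) x (EuclideanSpace.single i 1) *
        fderiv ℝ (prodCut a m') x (EuclideanSpace.single i 1)) atTop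
      (𝓝 (∑ i, if m = m' then (1 / 2) ^ d * (Real.pi ^ 2 * (m i : ℝ) ^ 2) else 0)) := by
    refine tendsto_finsetSum _ fun i _ => ?_
    simp_rw [integral_fderiv_prodCut_mul]
    have h := tendsto_finsetProd (Finset.univ : Finset (Fin d)) (f := fun j a =>
      if j = i then ∫ t, deriv (cutSin a (m j)) t * deriv (cutSin a (m' j)) t
        else ∫ t, cutSin a (m j) t * cutSin a (m' j) t)
      (a := fun j => if j = i then (if m j = m' j then Real.pi ^ 2 * (m j : ℝ) ^ 2 / 2 else 0)
        else (if m j = m' j then 1 / 2 else 0)) (x := atTop) (fun j _ => by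
          by_cases hj : j = i
          · simp only [hj, if_true]; exact tendsto_stiff (hm i)
          · simp only [hj, if_false]; exact tendsto_gram (hm j))
    convert h using 2
    split_ifs with hmm
    · subst hmm
      rw [← Finset.mul_prod_erase _ _ (Finset.mem_univ i)]
      rw [Finset.prod_congr rfl (g := fun _ => (1 / 2 : ℝ)) fun j hj => by
        simp [Finset.ne_of_mem_erase hj]]
      rw [Finset.prod_const, Finset.card_erase_of_mem (Finset.mem_univ i), Finset.card_univ,
        Fintype.card_fin]
      obtain ⟨e, rfl⟩ : ∃ e, d = e + 1 := ⟨d - 1, by have := i.pos; omega⟩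
      simp only [if_true, Nat.add_sub_cancel, pow_succ]
      ring
    · obtain ⟨j, hj⟩ := Function.ne_iff.1 hmm
      refine (Finset.prod_eq_zero (Finset.mem_univ j) ?_).symm
      simp [hj]
  convert h using 2
  split_ifs with hmm
  · rw [Finset.mul_sum, Finset.mul_sum]
  · simp

/-- Near-eigenfunctions of the unit cube in `C_c^∞`: every strict upper bound `β` of finitely many
eigenvalues `π²|m|²` bounds the Rayleigh quotient on the span of suitable smooth compactly
supported functions. -/
theorem exists_unit_family {d : ℕ} {ι : Type*} [Fintype ι] (m : ι → Fin d → ℕ)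
    (hinj : Function.Injective m) (hm : ∀ i j, 0 < m i j) {β : ℝ}
    (hβ : ∀ i, Real.pi ^ 2 * ∑ j, (m i j : ℝ) ^ 2 < β) :
    ∃ W : ι → EuclideanSpace ℝ (Fin d) → ℝ,
      (∀ i, ContDiff ℝ (⊤ : ℕ∞) (W i) ∧ HasCompactSupport (W i) ∧
        tsupport (W i) ⊆ {x | ∀ j, x j ∈ Set.Ioo (0 : ℝ) 1}) ∧
      ∀ c : ι → ℝ, c ≠ 0 → 0 < ∫ x, (∑ i, c i * W i x) ^ 2 ∧
        ∫ x, ‖fderiv ℝ (fun x => ∑ i, c i * W i x) x‖ ^ 2 ≤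
          β * ∫ x, (∑ i, c i * W i x) ^ 2 := by
  classical
  have h2 : (0 : ℝ) < (1 / 2) ^ d := by positivity
  have hG := eventually_quadForm_pos (ι := ι) (D := fun _ => (1 / 2 : ℝ) ^ d) (fun _ => h2)
    (T := fun a i j => ∫ x, prodCut a (m i) x * prodCut a (m j) x) (fun i j => by
      have := tendsto_gram_prodCut (m' := m j) (hm i)
      simpa only [hinj.eq_iff] using this)
  have hA := eventually_quadForm_pos (ι := ι)
    (D := fun i => (1 / 2 : ℝ) ^ d * (β - Real.pi ^ 2 * ∑ j, (m i j : ℝ) ^ 2))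
    (fun i => mul_pos h2 (by linarith [hβ i]))
    (T := fun a i j => β * (∫ x, prodCut a (m i) x * prodCut a (m j) x) -
      ∑ l, ∫ x, fderiv ℝ (prodCut a (m i)) x (EuclideanSpace.single l 1) *
        fderiv ℝ (prodCut a (m j)) x (EuclideanSpace.single l 1)) (fun i j => by
      have t1 := tendsto_gram_prodCut (m' := m j) (hm i)
      have t2 := tendsto_stiff_prodCut (m' := m j) (hm i)
      have t := (t1.const_mul β).sub t2
      convert t using 2
      simp only [hinj.eq_iff]
      split_ifs <;> ring)
  obtain ⟨a, ha0, haG, haA⟩ := ((eventually_gt_atTop (0 : ℝ)).and (hG.and hA)).exists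
  refine ⟨fun i => prodCut a (m i), fun i => ⟨contDiff_prodCut _ _,
    hasCompactSupport_prodCut ha0 _, tsupport_prodCut ha0 _⟩, fun c hc => ?_⟩
  have hcont : ∀ i, Continuous (prodCut a (m i)) := fun i => (contDiff_prodCut a (m i)).continuous
  have hdcont : ∀ i l, Continuous fun x =>
      fderiv ℝ (prodCut a (m i)) x (EuclideanSpace.single l 1) := fun i l =>
    ((contDiff_prodCut a (m i)).continuous_fderiv (by simp)).clm_apply continuous_const
  have hint : ∀ i j, Integrable fun x => prodCut a (m i) x * prodCut a (m j) x := fun i j =>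
    ((hcont i).mul (hcont j)).integrable_of_hasCompactSupport
      ((hasCompactSupport_prodCut ha0 _).mul_right)
  have hdint : ∀ i j l, Integrable fun x =>
      fderiv ℝ (prodCut a (m i)) x (EuclideanSpace.single l 1) *
        fderiv ℝ (prodCut a (m j)) x (EuclideanSpace.single l 1) := fun i j l =>
    ((hdcont i l).mul (hdcont j l)).integrable_of_hasCompactSupport
      (((hasCompactSupport_prodCut ha0 _).fderiv_apply ℝ _).mul_right)
  have e1 : ∫ x, (∑ i, c i * prodCut a (m i) x) ^ 2 =
      ∑ i, ∑ j, c i * c j * ∫ x, prodCut a (m i) x * prodCut a (m j) x := by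
    simp_rw [sq, Finset.sum_mul_sum]
    rw [integral_finsetSum _ fun i _ => integrable_finsetSum _ fun j _ =>
      ((hint i j).const_mul (c i * c j)).congr (Eventually.of_forall fun x => by ring)]
    refine Finset.sum_congr rfl fun i _ => ?_
    rw [integral_finsetSum _ fun j _ =>
      ((hint i j).const_mul (c i * c j)).congr (Eventually.of_forall fun x => by ring)]
    refine Finset.sum_congr rfl fun j _ => ?_
    rw [← integral_const_mul]
    congr 1; funext x; ring
  have e2 : ∫ x, ‖fderiv ℝ (fun x => ∑ i, c i * prodCut a (m i) x) x‖ ^ 2 =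
      ∑ i, ∑ j, c i * c j * ∑ l, ∫ x, fderiv ℝ (prodCut a (m i)) x (EuclideanSpace.single l 1) *
        fderiv ℝ (prodCut a (m j)) x (EuclideanSpace.single l 1) := by
    have hpt : ∀ x, ‖fderiv ℝ (fun x => ∑ i, c i * prodCut a (m i) x) x‖ ^ 2 =
        ∑ i, ∑ j, ∑ l, c i * c j * (fderiv ℝ (prodCut a (m i)) x (EuclideanSpace.single l 1) *
        fderiv ℝ (prodCut a (m j)) x (EuclideanSpace.single l 1)) := by
      intro x
      have hd : ∀ i, DifferentiableAt ℝ (prodCut a (m i)) x := fun i =>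
        (contDiff_prodCut a (m i)).differentiable (by simp) x
      rw [norm_sq_clm, fderiv_fun_sum fun i _ => (hd i).const_mul (c i)]
      simp_rw [fderiv_const_mul (hd _)]
      simp only [FunLike.coe_sum, Finset.sum_apply, FunLike.coe_smul, Pi.smul_apply,
        smul_eq_mul]
      simp_rw [sq, Finset.sum_mul_sum]
      rw [Finset.sum_comm]
      refine Finset.sum_congr rfl fun i _ => ?_
      rw [Finset.sum_comm]
      refine Finset.sum_congr rfl fun j _ => Finset.sum_congr rfl fun l _ => by ring
    simp_rw [hpt]
    rw [integral_finsetSum _ fun i _ => integrable_finsetSum _ fun j _ =>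
      integrable_finsetSum _ fun l _ => (hdint i j l).const_mul (c i * c j)]
    refine Finset.sum_congr rfl fun i _ => ?_
    rw [integral_finsetSum _ fun j _ =>
      integrable_finsetSum _ fun l _ => (hdint i j l).const_mul (c i * c j)]
    refine Finset.sum_congr rfl fun j _ => ?_
    rw [integral_finsetSum _ fun l _ => (hdint i j l).const_mul (c i * c j), Finset.mul_sum]
    exact Finset.sum_congr rfl fun l _ => integral_const_mul _ _
  refine ⟨e1 ▸ haG c hc, ?_⟩
  rw [e1, e2]
  have := haA c hc
  simp_rw [mul_sub, Finset.sum_sub_distrib] at this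
  rw [Finset.mul_sum]
  simp_rw [Finset.mul_sum]
  simp_rw [Finset.mul_sum] at this
  have e3 : ∀ i j, c i * c j * (β * ∫ x, prodCut a (m i) x * prodCut a (m j) x) =
      β * (c i * c j * ∫ x, prodCut a (m i) x * prodCut a (m j) x) := fun i j => by ring
  simp_rw [e3] at this
  linarith

/-! ### Modes of the cube and transplantation to disjoint cubes -/

/-- As `λ*_n` is defined as an infimum, `n` distinct modes of the cube are only guaranteed below each
`β > λ*_n`; this is all the argument needs. -/
theorem exists_cube_modes {d n : ℕ} (hd : 1 ≤ d) (hn : 1 ≤ n) :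
    0 ≤ cubeDirichletEig d n ∧ ∀ β, cubeDirichletEig d n < β →
      ∃ m : Fin n → Fin d → ℕ, Function.Injective m ∧ (∀ i j, 0 < m i j) ∧
        ∀ i, Real.pi ^ 2 * ∑ j, (m i j : ℝ) ^ 2 < β := by
  constructor
  · refine Real.sInf_nonneg fun t ht => ?_
    have h1 : (1 : ℕ∞) ≤ {m : Fin d → ℕ+ |
        Real.pi ^ 2 * ∑ j : Fin d, ((m j : ℕ) : ℝ) ^ 2 ≤ t}.encard :=
      le_trans (by exact_mod_cast hn) ht
    rw [Set.one_le_encard_iff_nonempty] at h1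
    obtain ⟨m, hm⟩ := h1
    exact le_trans (by positivity) hm
  · intro β hβ
    have hne : {t : ℝ | (n : ℕ∞) ≤ {m : Fin d → ℕ+ |
        Real.pi ^ 2 * ∑ j : Fin d, ((m j : ℕ) : ℝ) ^ 2 ≤ t}.encard}.Nonempty := by
      let f : Fin n → Fin d → ℕ+ := fun i _ => ⟨i + 1, by omega⟩
      have hf : Function.Injective f := by
        intro i i' h
        have := congrArg PNat.val (congrFun h ⟨0, hd⟩)
        simp only [f, PNat.mk_coe] at this
        ext
        omega
      refine ⟨Real.pi ^ 2 * ∑ j : Fin d, (n : ℝ) ^ 2, ?_⟩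
      have h1 : (Set.range f).encard = n := by
        rw [← Set.image_univ, hf.encard_image]; simp
      rw [Set.mem_ofPred_eq, ← h1]
      apply Set.encard_le_encard
      rintro _ ⟨i, rfl⟩
      change Real.pi ^ 2 * ∑ j : Fin d, ((i.1 + 1 : ℕ) : ℝ) ^ 2 ≤ _
      have := i.2
      gcongr
      omega
    obtain ⟨t, ht, htβ⟩ := exists_lt_of_csInf_lt hne hβ
    obtain ⟨s, hs, hsn⟩ := Set.exists_subset_encard_eq ht
    have hfin : s.Finite := Set.finite_of_encard_eq_coe hsn
    have hcard : Nat.card s = n := by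
      have : s.ncard = n := by rw [Set.ncard_def, hsn]; rfl
      simpa using this
    have := hfin.to_subtype
    let e := Finite.equivFinOfCardEq hcard
    refine ⟨fun i j => ((e.symm i).1 j : ℕ), ?_, fun i j => PNat.pos _, fun i => ?_⟩
    · intro i i' h
      apply e.symm.injective
      ext j
      exact PNat.eq (congrFun h j)
    · exact lt_of_le_of_lt (hs (e.symm i).2) htβ

/-- At most one nonzero summand: no cross terms. -/
theorem norm_sum_sq_of_disjoint {Z F : Type*} [Fintype Z] [NormedAddCommGroup F] (L : Z → F)
    (h : ∀ z z', L z ≠ 0 → L z' ≠ 0 → z = z') : ‖∑ z, L z‖ ^ 2 = ∑ z, ‖L z‖ ^ 2 := by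
  by_cases h0 : ∃ z, L z ≠ 0
  · obtain ⟨z, hz⟩ := h0
    have h1 : ∀ z', z' ≠ z → L z' = 0 := fun z' hz' => by
      by_contra h2
      exact hz' (h _ _ h2 hz)
    rw [Finset.sum_eq_single z (fun z' _ hz' => h1 z' hz') (by simp),
      Finset.sum_eq_single z (fun z' _ hz' => by simp [h1 z' hz']) (by simp)]
  · push Not at h0
    simp [h0]

theorem integral_comp_rescale {d : ℕ} {ℓ : ℝ} (hℓ : 0 < ℓ) (p : EuclideanSpace ℝ (Fin d))
    (F : EuclideanSpace ℝ (Fin d) → ℝ) :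
    ∫ x, F (ℓ⁻¹ • (x - p)) = ℓ ^ d * ∫ x, F x := by
  rw [integral_sub_right_eq_self (fun y => F (ℓ⁻¹ • y)) p,
    Measure.integral_comp_inv_smul_of_nonneg _ _ hℓ.le]
  simp

theorem fderiv_comp_rescale {d : ℕ} (ℓ : ℝ) (p x : EuclideanSpace ℝ (Fin d))
    (w : EuclideanSpace ℝ (Fin d) → ℝ) :
    fderiv ℝ (fun x => w (ℓ⁻¹ • (x - p))) x = ℓ⁻¹ • fderiv ℝ w (ℓ⁻¹ • (x - p)) := by
  rw [fderiv_comp_sub (f := fun y => w (ℓ⁻¹ • y)) p, fderiv_comp_smul]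

/-- The functions of the unit cube, transplanted to `card Z` disjoint cubes of side `ℓ` inside
`Ω`, produce `n * card Z` eigenvalues below `α`. -/
theorem cubes_le_encard {d n : ℕ} {Ω : Set (EuclideanSpace ℝ (Fin d))}
    {ℓ α β : ℝ} (hℓ : 0 < ℓ) (hβ0 : 0 ≤ β) (hβ : β / ℓ ^ 2 < α)
    (W : Fin n → EuclideanSpace ℝ (Fin d) → ℝ)
    (hW : ∀ i, ContDiff ℝ (⊤ : ℕ∞) (W i) ∧ HasCompactSupport (W i) ∧
      tsupport (W i) ⊆ {x | ∀ j, x j ∈ Set.Ioo (0 : ℝ) 1})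
    (hWR : ∀ c : Fin n → ℝ, c ≠ 0 → 0 < ∫ x, (∑ i, c i * W i x) ^ 2 ∧
        ∫ x, ‖fderiv ℝ (fun x => ∑ i, c i * W i x) x‖ ^ 2 ≤
          β * ∫ x, (∑ i, c i * W i x) ^ 2)
    {Z : Type*} [Fintype Z] (p : Z → EuclideanSpace ℝ (Fin d))
    (hdisj : ∀ z z' x, (∀ j, (ℓ⁻¹ • (x - p z)) j ∈ Set.Ioo (0 : ℝ) 1) →
      (∀ j, (ℓ⁻¹ • (x - p z')) j ∈ Set.Ioo (0 : ℝ) 1) → z = z')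
    (hsub : ∀ z x, (∀ j, (ℓ⁻¹ • (x - p z)) j ∈ Set.Ioo (0 : ℝ) 1) → x ∈ Ω) :
    ((n * Fintype.card Z : ℕ) : ℕ∞) ≤ {k : ℕ | 1 ≤ k ∧ dirichletEig d k Ω < α}.encard := by
  have hℓi : ℓ⁻¹ ≠ 0 := inv_ne_zero hℓ.ne'
  set Q : Set (EuclideanSpace ℝ (Fin d)) := {x | ∀ j, x j ∈ Set.Ioo (0 : ℝ) 1} with hQ
  have hK : IsCompact ((WithLp.toLp 2 : (Fin d → ℝ) → EuclideanSpace ℝ (Fin d)) ''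
      Set.pi Set.univ fun _ => Set.Icc (0 : ℝ) 1) :=
    (isCompact_univ_pi fun _ => isCompact_Icc).image (PiLp.continuous_toLp 2 _)
  have hQK : Q ⊆ ((WithLp.toLp 2 : (Fin d → ℝ) → EuclideanSpace ℝ (Fin d)) ''
      Set.pi Set.univ fun _ => Set.Icc (0 : ℝ) 1) := fun x hx =>
    ⟨WithLp.ofLp x, fun j _ => Set.Ioo_subset_Icc_self (hx j), rfl⟩
  -- the rescaled copy of `W i` in the cube with corner `p z`
  let φ : Z × Fin n → EuclideanSpace ℝ (Fin d) → ℝ := fun zi x => W zi.2 (ℓ⁻¹ • (x - p zi.1))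
  have hφ : ∀ zi, ContDiff ℝ (⊤ : ℕ∞) (φ zi) ∧ HasCompactSupport (φ zi) ∧ tsupport (φ zi) ⊆ Ω := by
    rintro ⟨z, i⟩
    let h : EuclideanSpace ℝ (Fin d) ≃ₜ EuclideanSpace ℝ (Fin d) :=
      (Homeomorph.subRight (p z)).trans (Homeomorph.smulOfNeZero ℓ⁻¹ hℓi)
    have hφh : φ (z, i) = W i ∘ h := rfl
    refine ⟨(hW i).1.comp (by fun_prop), ?_, ?_⟩
    · rw [hφh]; exact (hW i).2.1.comp_homeomorph h
    · rw [hφh, tsupport_comp_eq_preimage]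
      exact fun x hx => hsub z x ((hW i).2.2 hx)
  -- the part of the combination with coefficients `c` that lives on cube `z`, in the coordinates
  -- of the unit cube
  let w : (Z × Fin n → ℝ) → Z → EuclideanSpace ℝ (Fin d) → ℝ :=
    fun c z y => ∑ i, c (z, i) * W i y
  have hw0 : ∀ c z y, y ∉ Q → w c z y = 0 := by
    intro c z y hy
    refine Finset.sum_eq_zero fun i _ => ?_
    rw [image_eq_zero_of_notMem_tsupport fun h => hy ((hW i).2.2 h), mul_zero]
  have hwd : ∀ c z, ContDiff ℝ (⊤ : ℕ∞) (w c z) := fun c z =>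
    ContDiff.sum fun i _ => contDiff_const.mul (hW i).1
  have hwts : ∀ c z, tsupport (w c z) ⊆ Q := by
    intro c z
    have h1 : tsupport (w c z) ⊆ ⋃ i, tsupport (W i) := by
      apply closure_minimal
      · intro y hy
        by_contra h
        rw [Set.mem_iUnion, not_exists] at h
        exact hy (Finset.sum_eq_zero fun i _ => by
          rw [image_eq_zero_of_notMem_tsupport (h i), mul_zero])
      · exact isClosed_iUnion_of_finite fun i => isClosed_tsupport _
    exact h1.trans (Set.iUnion_subset fun i => (hW i).2.2)
  have hwc : ∀ c z, HasCompactSupport (w c z) := fun c z =>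
    HasCompactSupport.intro hK fun y hy => hw0 c z y fun h => hy (hQK h)
  have hwf0 : ∀ c z y, y ∉ Q → fderiv ℝ (w c z) y = 0 := fun c z y hy => by
    by_contra h
    exact hy (hwts c z (support_fderiv_subset ℝ h))
  have hu : ∀ c : Z × Fin n → ℝ, (fun x => ∑ zi, c zi * φ zi x) =
      fun x => ∑ z, w c z (ℓ⁻¹ • (x - p z)) := by
    intro c
    funext x
    rw [Fintype.sum_prod_type]
  have hint1 : ∀ c z, Integrable fun x => (w c z (ℓ⁻¹ • (x - p z))) ^ 2 := by
    intro c z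
    have h : Integrable fun y => (w c z y) ^ 2 := by
      refine ((hwd c z).continuous.pow 2).integrable_of_hasCompactSupport ?_
      exact HasCompactSupport.intro hK fun y hy => by simp [hw0 c z y fun h => hy (hQK h)]
    exact (h.comp_smul hℓi).comp_sub_right (p z)
  have hint2 : ∀ c z, Integrable fun x => ‖fderiv ℝ (w c z) (ℓ⁻¹ • (x - p z))‖ ^ 2 := by
    intro c z
    have h : Integrable fun y => ‖fderiv ℝ (w c z) y‖ ^ 2 := by
      refine (((hwd c z).continuous_fderiv (by simp)).norm.pow 2).integrable_of_hasCompactSupport ?_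
      exact HasCompactSupport.intro hK fun y hy => by simp [hwf0 c z y fun h => hy (hQK h)]
    exact (h.comp_smul hℓi).comp_sub_right (p z)
  -- in `I1` and `I2` all cross terms vanish because the supports are disjoint
  have I1 : ∀ c : Z × Fin n → ℝ, ∫ x in Ω, (∑ zi, c zi * φ zi x) ^ 2 =
      ∑ z, ℓ ^ d * ∫ y, (w c z y) ^ 2 := by
    intro c
    have hpt : ∀ x, (∑ zi, c zi * φ zi x) ^ 2 = ∑ z, (w c z (ℓ⁻¹ • (x - p z))) ^ 2 := by
      intro x
      have h1 := norm_sum_sq_of_disjoint (fun z => w c z (ℓ⁻¹ • (x - p z))) fun z z' hz hz' =>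
        hdisj z z' x (by by_contra h; exact hz (hw0 c z _ h)) (by
          by_contra h; exact hz' (hw0 c z' _ h))
      have h2 := congrFun (hu c) x
      simp only [Real.norm_eq_abs, sq_abs] at h1
      rw [← h1]
      exact congrArg (· ^ 2) h2
    rw [setIntegral_eq_integral_of_forall_compl_eq_zero]
    · simp_rw [hpt]
      rw [integral_finsetSum _ fun z _ => hint1 c z]
      exact Finset.sum_congr rfl fun z _ =>
        integral_comp_rescale hℓ (p z) fun y => (w c z y) ^ 2
    · intro x hx
      rw [hpt]
      refine Finset.sum_eq_zero fun z _ => ?_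
      rw [hw0 c z _ fun h => hx (hsub z x h)]; simp
  have I2 : ∀ c : Z × Fin n → ℝ, ∫ x in Ω, ‖fderiv ℝ (fun x => ∑ zi, c zi * φ zi x) x‖ ^ 2 =
      ∑ z, (ℓ ^ 2)⁻¹ * (ℓ ^ d * ∫ y, ‖fderiv ℝ (w c z) y‖ ^ 2) := by
    intro c
    have hpt : ∀ x, ‖fderiv ℝ (fun x => ∑ zi, c zi * φ zi x) x‖ ^ 2 =
        ∑ z, (ℓ ^ 2)⁻¹ * ‖fderiv ℝ (w c z) (ℓ⁻¹ • (x - p z))‖ ^ 2 := by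
      intro x
      rw [hu c, fderiv_fun_sum fun z _ => ?_]
      · simp_rw [fderiv_comp_rescale ℓ]
        rw [norm_sum_sq_of_disjoint]
        · refine Finset.sum_congr rfl fun z _ => ?_
          rw [norm_smul, mul_pow]
          simp
        · intro z z' hz hz'
          refine hdisj z z' x ?_ ?_
          · by_contra h
            exact hz (by rw [hwf0 c z _ h, smul_zero])
          · by_contra h
            exact hz' (by rw [hwf0 c z' _ h, smul_zero])
      · exact (((hwd c z).comp (by fun_prop : ContDiff ℝ (⊤ : ℕ∞)
          fun x : EuclideanSpace ℝ (Fin d) => ℓ⁻¹ • (x - p z))).differentiable (by simp)) x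
    rw [setIntegral_eq_integral_of_forall_compl_eq_zero]
    · simp_rw [hpt]
      rw [integral_finsetSum _ fun z _ => (hint2 c z).const_mul _]
      refine Finset.sum_congr rfl fun z _ => ?_
      rw [integral_const_mul, integral_comp_rescale hℓ (p z) fun y => ‖fderiv ℝ (w c z) y‖ ^ 2]
    · intro x hx
      rw [hpt]
      refine Finset.sum_eq_zero fun z _ => ?_
      rw [hwf0 c z _ fun h => hx (hsub z x h)]; simp
  have hrow : ∀ (c : Z × Fin n → ℝ) z, 0 ≤ ∫ y, (w c z y) ^ 2 ∧
      ∫ y, ‖fderiv ℝ (w c z) y‖ ^ 2 ≤ β * ∫ y, (w c z y) ^ 2 := by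
    intro c z
    refine ⟨integral_nonneg fun _ => sq_nonneg _, ?_⟩
    by_cases h : (fun i => c (z, i)) = 0
    · have h0 : w c z = fun _ => 0 := by
        funext y
        exact Finset.sum_eq_zero fun i _ => by rw [show c (z, i) = 0 from congrFun h i, zero_mul]
      simp [h0]
    · exact (hWR _ h).2
  have key : ∀ k ≤ n * Fintype.card Z, dirichletEig d k Ω ≤ β / ℓ ^ 2 := by
    intro k hk
    refine dirichletEig_le φ hφ (by positivity) ?_ ?_ (by
      rw [Fintype.card_prod, Fintype.card_fin, mul_comm]; exact hk)
    · intro c hc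
      rw [I1 c]
      obtain ⟨⟨z, i⟩, hzi⟩ := Function.ne_iff.1 hc
      refine Finset.sum_pos' (fun z _ => mul_nonneg (by positivity) (hrow c z).1)
        ⟨z, Finset.mem_univ _, mul_pos (by positivity) ?_⟩
      exact (hWR (fun i => c (z, i)) (Function.ne_iff.2 ⟨i, hzi⟩)).1
    · intro c
      rw [I1 c, I2 c, Finset.mul_sum]
      refine Finset.sum_le_sum fun z _ => ?_
      have h1 := (hrow c z).2
      calc (ℓ ^ 2)⁻¹ * (ℓ ^ d * ∫ y, ‖fderiv ℝ (w c z) y‖ ^ 2)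
          ≤ (ℓ ^ 2)⁻¹ * (ℓ ^ d * (β * ∫ y, (w c z y) ^ 2)) := by gcongr
        _ = _ := by ring
  have hcard : ((Finset.Icc 1 (n * Fintype.card Z) : Finset ℕ) : Set ℕ).encard
      = ((n * Fintype.card Z : ℕ) : ℕ∞) := by
    rw [Set.encard_coe_eq_coe_finsetCard]; simp
  rw [← hcard]
  apply Set.encard_le_encard
  intro k hk
  rw [Finset.coe_Icc] at hk
  exact ⟨hk.1, (key k hk.2).trans_lt hβ⟩

/-! ### Erosion of convex sets along coordinate axes -/

/-- The linear map on `ℝ^(m+1)` that forgets the `j`-th coordinate. The target carries the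
sup norm. -/
noncomputable def dropCoord {m : ℕ} (j : Fin (m + 1)) :
    EuclideanSpace ℝ (Fin (m + 1)) →L[ℝ] (Fin m → ℝ) :=
  ContinuousLinearMap.pi fun i => EuclideanSpace.proj (j.succAbove i)

lemma dropCoord_apply {m : ℕ} (j : Fin (m + 1)) (x : EuclideanSpace ℝ (Fin (m + 1))) (i : Fin m) :
    dropCoord j x i = x (j.succAbove i) := rfl

lemma dropCoord_toLp_insertNth {m : ℕ} (j : Fin (m + 1)) (t : ℝ) (y : Fin m → ℝ) :
    dropCoord j (WithLp.toLp 2 (Fin.insertNth (α := fun _ => ℝ) j t y)) = y := by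
  ext i
  simp [dropCoord_apply]

lemma isOpenMap_dropCoord {m : ℕ} (j : Fin (m + 1)) : IsOpenMap (dropCoord j) :=
  (dropCoord j).isOpenMap fun y => ⟨_, dropCoord_toLp_insertNth j 0 y⟩

lemma eq_of_dropCoord_eq {m : ℕ} {j : Fin (m + 1)} {x y : EuclideanSpace ℝ (Fin (m + 1))}
    (h : dropCoord j x = dropCoord j y) :
    y = x + (y j - x j) • EuclideanSpace.single j (1 : ℝ) := by
  ext i
  rcases Fin.eq_self_or_eq_succAbove j i with rfl | ⟨k, rfl⟩
  · simp
  · have := congrFun h k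
    simp only [dropCoord_apply] at this
    simp [this, Fin.succAbove_ne]

lemma dropCoord_add_smul_single {m : ℕ} (j : Fin (m + 1)) (x : EuclideanSpace ℝ (Fin (m + 1)))
    (t : ℝ) : dropCoord j (x + t • EuclideanSpace.single j (1 : ℝ)) = dropCoord j x := by
  ext k
  simp [dropCoord_apply, Fin.succAbove_ne]

/-- Fubini: a set whose sections parallel to the `j`-th axis have diameter at most `ℓ` has
volume at most `ℓ` times that of its projection along this axis. -/
lemma volume_le_of_sections {m : ℕ} (j : Fin (m + 1)) {ℓ : ℝ}
    {D : Set (EuclideanSpace ℝ (Fin (m + 1)))} (hD : MeasurableSet D)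
    (hsec : ∀ x ∈ D, ∀ y ∈ D, dropCoord j x = dropCoord j y → |x j - y j| ≤ ℓ)
    {P : Set (Fin m → ℝ)} (hP : MeasurableSet P) (hDP : ∀ x ∈ D, dropCoord j x ∈ P) :
    volume D ≤ ENNReal.ofReal ℓ * volume P := by
  have hmp := ((volume_preserving_piFinSuccAbove (fun _ => ℝ) j).symm).comp
    (MeasurePreserving.id (volume : Measure (ℝ × (Fin m → ℝ))))
  have hmp2 := (PiLp.volume_preserving_toLp (Fin (m + 1))).comp hmp
  have hv : volume D = (volume : Measure (ℝ × (Fin m → ℝ)))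
      ((fun p : ℝ × (Fin m → ℝ) =>
        WithLp.toLp 2 (Fin.insertNth (α := fun _ => ℝ) j p.1 p.2)) ⁻¹' D) := by
    rw [← hmp2.measure_preimage hD.nullMeasurableSet]
    rfl
  have hms : MeasurableSet ((fun p : ℝ × (Fin m → ℝ) =>
        WithLp.toLp 2 (Fin.insertNth (α := fun _ => ℝ) j p.1 p.2)) ⁻¹' D) :=
    hmp2.measurable hD
  rw [hv, Measure.volume_eq_prod, Measure.prod_apply_symm hms]
  calc _ ≤ ∫⁻ y : Fin m → ℝ, P.indicator (fun _ => ENNReal.ofReal ℓ) y := by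
        refine lintegral_mono fun y => ?_
        by_cases hy : y ∈ P
        · rw [Set.indicator_of_mem hy]
          refine (Real.volume_le_diam _).trans (Metric.ediam_le ?_)
          intro s hs t ht
          have h := hsec _ hs _ ht (by rw [dropCoord_toLp_insertNth, dropCoord_toLp_insertNth])
          rw [edist_dist, Real.dist_eq]
          refine ENNReal.ofReal_le_ofReal ?_
          simpa using h
        · rw [Set.indicator_of_notMem hy, nonpos_iff_eq_zero]
          convert measure_empty (μ := (volume : Measure ℝ))
          ext t
          simp only [Set.mem_preimage, Set.mem_empty_iff_false, iff_false]
          intro ht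
          exact hy (by simpa [dropCoord_toLp_insertNth] using hDP _ ht)
    _ = _ := by rw [lintegral_indicator_const hP]

/-- Removing from an open convex set the points that leave it when moved by `ℓ` along the
`j`-th axis costs at most `ℓ` times the volume of the projection. -/
lemma volume_le_erode {m : ℕ} (j : Fin (m + 1)) {ℓ : ℝ} (hℓ : 0 ≤ ℓ)
    {B : Set (EuclideanSpace ℝ (Fin (m + 1)))} (hBo : IsOpen B) (hBc : Convex ℝ B) :
    volume B ≤ volume (B ∩ {x | x + ℓ • EuclideanSpace.single j (1 : ℝ) ∈ B}) +
      ENNReal.ofReal ℓ * volume (dropCoord j '' B) := by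
  have hCo : IsOpen {x : EuclideanSpace ℝ (Fin (m + 1)) |
      x + ℓ • EuclideanSpace.single j (1 : ℝ) ∈ B} :=
    hBo.preimage (continuous_id.add continuous_const)
  set C := {x : EuclideanSpace ℝ (Fin (m + 1)) | x + ℓ • EuclideanSpace.single j (1 : ℝ) ∈ B}
  rw [← measure_inter_add_sdiff B hCo.measurableSet]
  gcongr
  refine volume_le_of_sections j (hBo.measurableSet.diff hCo.measurableSet) ?_
    (isOpenMap_dropCoord j B hBo).measurableSet fun x hx => ⟨x, hx.1, rfl⟩
  -- two points of a section further apart than `ℓ` would keep the lower one inside `B`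
  have key : ∀ x ∈ B \ C, ∀ y ∈ B \ C, dropCoord j x = dropCoord j y → y j - x j ≤ ℓ := by
    intro x hx y hy hxy
    by_contra! hlt
    apply hx.2
    have hy' := eq_of_dropCoord_eq hxy
    have hpos : 0 < y j - x j := hℓ.trans_lt hlt
    have := hBc.add_smul_mem hx.1 (y := (y j - x j) • EuclideanSpace.single j (1 : ℝ))
      (hy' ▸ hy.1) (t := ℓ / (y j - x j)) ⟨by positivity, by rw [div_le_one hpos]; exact hlt.le⟩
    rw [smul_smul, div_mul_cancel₀ _ hpos.ne'] at this
    exact this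
  intro x hx y hy hxy
  rw [abs_le]
  constructor
  · linarith [key x hx y hy hxy]
  · linarith [key y hy x hx hxy.symm]

/-- Iterating the erosion over a set `S` of coordinates. -/
lemma exists_erosion {m : ℕ} {ℓ : ℝ} (hℓ : 0 ≤ ℓ)
    {Ω : Set (EuclideanSpace ℝ (Fin (m + 1)))} (hΩo : IsOpen Ω) (hΩc : Convex ℝ Ω)
    (S : Finset (Fin (m + 1))) :
    ∃ B ⊆ Ω, IsOpen B ∧ Convex ℝ B ∧
      (∀ x ∈ B, ∀ v : EuclideanSpace ℝ (Fin (m + 1)), (∀ j ∈ S, v j ∈ Set.Icc 0 ℓ) →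
        (∀ j ∉ S, v j = 0) → x + v ∈ Ω) ∧
      volume Ω ≤ volume B + ENNReal.ofReal ℓ * ∑ j ∈ S, volume (dropCoord j '' Ω) := by
  classical
  induction S using Finset.induction_on with
  | empty =>
    refine ⟨Ω, subset_rfl, hΩo, hΩc, fun x hx v _ hv => ?_, by simp⟩
    have : v = 0 := by
      ext j
      simpa using hv j
    simpa [this] using hx
  | insert a S ha ih =>
    obtain ⟨B, hBΩ, hBo, hBc, hBv, hvol⟩ := ih
    refine ⟨B ∩ {x | x + ℓ • EuclideanSpace.single a (1 : ℝ) ∈ B},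
      Set.inter_subset_left.trans hBΩ,
      hBo.inter (hBo.preimage (continuous_id.add continuous_const)),
      hBc.inter (hBc.translate_preimage_left _), ?_, ?_⟩
    · intro x hx v hv hv0
      have hva := hv a (Finset.mem_insert_self a S)
      -- move along the `a`-th axis inside `B`, then along the axes of `S`
      have hxa : x + (v a) • EuclideanSpace.single a (1 : ℝ) ∈ B := by
        rcases hℓ.eq_or_lt with rfl | hpos
        · have : v a = 0 := le_antisymm hva.2 hva.1
          simpa [this] using hx.1
        · have := hBc.add_smul_mem hx.1 hx.2 (t := v a / ℓ)
            ⟨div_nonneg hva.1 hℓ, by rw [div_le_one hpos]; exact hva.2⟩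
          rwa [smul_smul, div_mul_cancel₀ _ hpos.ne'] at this
      have := hBv _ hxa (v - (v a) • EuclideanSpace.single a (1 : ℝ)) ?_ ?_
      · convert this using 1
        abel
      · intro j hj
        have hja : j ≠ a := fun h => ha (h ▸ hj)
        simpa [hja] using hv j (Finset.mem_insert_of_mem hj)
      · intro j hj
        by_cases hja : j = a
        · subst hja; simp
        · simpa [hja] using hv0 j (by simp [hja, hj])
    · calc volume Ω ≤ volume B + ENNReal.ofReal ℓ * ∑ j ∈ S, volume (dropCoord j '' Ω) := hvol
        _ ≤ (volume (B ∩ {x | x + ℓ • EuclideanSpace.single a (1 : ℝ) ∈ B}) +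
              ENNReal.ofReal ℓ * volume (dropCoord a '' Ω)) +
              ENNReal.ofReal ℓ * ∑ j ∈ S, volume (dropCoord j '' Ω) := by
            gcongr
            refine (volume_le_erode a hℓ hBo hBc).trans ?_
            gcongr
        _ = _ := by
            rw [Finset.sum_insert ha, mul_add, add_assoc]

/-! ### Lattice points in a set of given volume -/

lemma volume_cell (d : ℕ) {ℓ : ℝ} (hℓ : 0 < ℓ) :
    volume {x : EuclideanSpace ℝ (Fin d) | ∀ j, x j ∈ Set.Ico 0 ℓ} = ENNReal.ofReal (ℓ ^ d) := by
  have h : {x : EuclideanSpace ℝ (Fin d) | ∀ j, x j ∈ Set.Ico 0 ℓ} =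
      (@WithLp.ofLp 2 (Fin d → ℝ)) ⁻¹' (Set.pi Set.univ fun _ => Set.Ico 0 ℓ) := by
    ext x
    simp
  rw [h, (PiLp.volume_preserving_ofLp (Fin d)).measure_preimage
    (MeasurableSet.univ_pi fun _ => measurableSet_Ico).nullMeasurableSet]
  simp [Real.volume_pi_Ico, ENNReal.ofReal_pow hℓ.le]

/-- Averaging over translates: some translate of the lattice `ℓ ℤ^d` has at least `|A| / ℓ^d`
points in `A`. -/
lemma exists_lattice_translate {d : ℕ} {ℓ : ℝ} (hℓ : 0 < ℓ) {A : Set (EuclideanSpace ℝ (Fin d))}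
    (hA : MeasurableSet A) (hAfin : volume A ≠ ⊤) :
    ∃ x₀ : EuclideanSpace ℝ (Fin d), volume A ≤ ENNReal.ofReal (ℓ ^ d) *
      (({z : Fin d → ℤ | x₀ + WithLp.toLp 2 (fun j => ℓ * (z j : ℝ)) ∈ A}.encard : ℕ∞) : ENNReal) := by
  by_contra! hcon
  set s : (Fin d → ℤ) → EuclideanSpace ℝ (Fin d) := fun z => WithLp.toLp 2 (fun j => ℓ * (z j : ℝ))
    with hs
  set Q := {x : EuclideanSpace ℝ (Fin d) | ∀ j, x j ∈ Set.Ico 0 ℓ} with hQ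
  have hQm : MeasurableSet Q := by
    rw [hQ, Set.ofPred_forall]
    exact MeasurableSet.iInter fun j => measurableSet_Ico.preimage
      (EuclideanSpace.proj (𝕜 := ℝ) j).continuous.measurable
  have hQv : volume Q = ENNReal.ofReal (ℓ ^ d) := volume_cell d hℓ
  have hc0 : ENNReal.ofReal (ℓ ^ d) ≠ 0 := by
    simpa using pow_pos hℓ d
  set f : EuclideanSpace ℝ (Fin d) → ENNReal := fun x => ∑' z, A.indicator 1 (x + s z) with hf
  have hfe : ∀ x, f x = (({z : Fin d → ℤ | x + s z ∈ A}.encard : ℕ∞) : ENNReal) := by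
    intro x
    rw [← ENNReal.tsum_set_one, tsum_subtype _ (fun _ => (1 : ENNReal))]
    rfl
  have hlt : ∀ x, f x < volume A / ENNReal.ofReal (ℓ ^ d) := by
    intro x
    rw [ENNReal.lt_div_iff_mul_lt (Or.inl hc0) (Or.inl ENNReal.ofReal_ne_top), mul_comm, hfe]
    exact hcon x
  have hconst : ∫⁻ _ in Q, volume A / ENNReal.ofReal (ℓ ^ d) = volume A := by
    rw [setLIntegral_const, hQv, ENNReal.div_mul_cancel hc0 ENNReal.ofReal_ne_top]
  have hle : ∫⁻ x in Q, f x ≤ volume A := by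
    rw [← hconst]
    exact lintegral_mono fun x => (hlt x).le
  have hstrict : ∫⁻ x in Q, f x < volume A := by
    rw [← hconst]
    refine lintegral_strict_mono ?_ aemeasurable_const (ne_top_of_le_ne_top hAfin hle)
      (Eventually.of_forall hlt)
    rw [Ne, Measure.restrict_eq_zero, hQv]
    exact hc0
  refine absurd hstrict (not_lt.mpr ?_)
  have hmeas : ∀ z, Measurable fun x => A.indicator (1 : EuclideanSpace ℝ (Fin d) → ENNReal) (x + s z) := fun z =>
    (measurable_one.indicator hA).comp (measurable_id.add_const _)
  rw [hf, lintegral_tsum fun z => (hmeas z).aemeasurable]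
  calc volume A ≤ volume (⋃ z, A ∩ (fun x => x - s z) ⁻¹' Q) := by
        refine measure_mono fun x hx => ?_
        refine Set.mem_iUnion.mpr ⟨fun j => ⌊x j / ℓ⌋, hx, fun j => ?_⟩
        have h1 := Int.floor_le (x j / ℓ)
        have h2 := Int.lt_floor_add_one (x j / ℓ)
        rw [le_div_iff₀ hℓ] at h1
        rw [div_lt_iff₀ hℓ] at h2
        simp only [hs, PiLp.sub_apply, Set.mem_Ico]
        constructor <;> linarith
    _ ≤ ∑' z, volume (A ∩ (fun x => x - s z) ⁻¹' Q) := measure_iUnion_le _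
    _ = ∑' z, ∫⁻ x in Q, A.indicator 1 (x + s z) := by
        refine tsum_congr fun z => ?_
        have : (fun x => A.indicator (1 : EuclideanSpace ℝ (Fin d) → ENNReal) (x + s z)) =
            ((fun x => x + s z) ⁻¹' A).indicator 1 := rfl
        have hAz : MeasurableSet ((fun x => x + s z) ⁻¹' A) :=
          (measurable_add_const (s z)) hA
        rw [this, lintegral_indicator_one hAz, Measure.restrict_apply hAz,
          ← measure_preimage_add_right volume (s z) (A ∩ _), Set.preimage_inter]
        congr 2
        ext x
        simp

/-! ### Shadows of convex sets and the measure of the boundary -/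

/-- A ray starting in a bounded open set crosses its boundary. -/
lemma exists_ray_mem_frontier {E : Type*} [NormedAddCommGroup E] [NormedSpace ℝ E] {Ω : Set E}
    (hΩo : IsOpen Ω) (hΩb : Bornology.IsBounded Ω) {x e : E} (hx : x ∈ Ω) (he : e ≠ 0) :
    ∃ t : ℝ, 0 < t ∧ x + t • e ∈ frontier Ω := by
  by_contra! hcon
  have hc : Continuous fun t : ℝ => x + t • e := by fun_prop
  obtain ⟨R, hR⟩ := hΩb.closure.subset_closedBall x
  have hne : 0 < ‖e‖ := norm_pos_iff.mpr he
  have hcov : Set.Ici (0 : ℝ) ⊆ (fun t : ℝ => x + t • e) ⁻¹' Ω ∪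
      (fun t : ℝ => x + t • e) ⁻¹' (closure Ω)ᶜ := by
    intro t ht
    by_cases h1 : x + t • e ∈ Ω
    · exact Or.inl h1
    · refine Or.inr fun h2 => ?_
      rcases (Set.mem_Ici.mp ht).eq_or_lt with rfl | h0
      · simp [hx] at h1
      · exact hcon t h0 (by rw [hΩo.frontier_eq]; exact ⟨h2, h1⟩)
  obtain ⟨t, -, h1, h2⟩ := isPreconnected_Ici (a := (0 : ℝ)) _ _ (hΩo.preimage hc)
    (isClosed_closure.isOpen_compl.preimage hc) hcov ⟨0, by simp, by simpa using hx⟩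
    ⟨(|R| + 1) / ‖e‖, by simp only [Set.mem_Ici]; positivity, fun h => by
      have := hR h
      rw [Metric.mem_closedBall, dist_eq_norm, add_sub_cancel_left, norm_smul, Real.norm_eq_abs,
        abs_of_pos (by positivity), div_mul_cancel₀ _ hne.ne'] at this
      linarith [le_abs_self R]⟩
  exact h2 (subset_closure h1)

/-- If the projection along the `j`-th axis multiplies the `m`-dimensional Hausdorff measure by at
most `κ`, then twice the volume of the shadow of `Ω` is at most `κ |∂Ω|`: both the upper and the
lower half of the boundary project onto the shadow, and by convexity these halves are disjoint. -/
lemma two_mul_volume_shadow_le {m : ℕ} (j : Fin (m + 1)) {κ : ENNReal}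
    (hκ : ∀ F : Set (EuclideanSpace ℝ (Fin (m + 1))),
      volume (dropCoord j '' F) ≤ κ * μH[(m : ℝ)] F)
    {Ω : Set (EuclideanSpace ℝ (Fin (m + 1)))} (hΩo : IsOpen Ω) (hΩc : Convex ℝ Ω)
    (hΩb : Bornology.IsBounded Ω) :
    2 * volume (dropCoord j '' Ω) ≤ κ * μH[(m : ℝ)] (frontier Ω) := by
  set e : EuclideanSpace ℝ (Fin (m + 1)) := EuclideanSpace.single j (1 : ℝ) with he
  have he0 : e ≠ 0 := fun h => by simpa [he] using congrArg (fun v => v j) h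
  set V : ℝ → Set (EuclideanSpace ℝ (Fin (m + 1))) := fun σ =>
    {x | ∃ t : ℝ, 0 < t ∧ x - (σ * t) • e ∈ Ω} with hV
  have hVo : ∀ σ, IsOpen (V σ) := by
    intro σ
    have : V σ = ⋃ t : Set.Ioi (0 : ℝ), (fun x => x - (σ * t.1) • e) ⁻¹' Ω := by
      ext x
      simp [hV]
    rw [this]
    exact isOpen_iUnion fun t => hΩo.preimage (continuous_id.sub continuous_const)
  have hproj : ∀ σ : ℝ, σ ≠ 0 → volume (dropCoord j '' Ω) ≤
      κ * μH[(m : ℝ)] (frontier Ω ∩ V σ) := by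
    intro σ hσ
    refine le_trans (measure_mono ?_) (hκ _)
    rintro _ ⟨x, hx, rfl⟩
    obtain ⟨t, ht, hxt⟩ := exists_ray_mem_frontier hΩo hΩb hx (smul_ne_zero hσ he0)
    refine ⟨x + t • σ • e, ⟨hxt, t, ht, ?_⟩, ?_⟩
    · rw [smul_smul, mul_comm t σ, add_sub_cancel_right]
      exact hx
    · rw [smul_smul]
      exact dropCoord_add_smul_single j x _
  have hdisj : Disjoint (frontier Ω ∩ V 1) (frontier Ω ∩ V (-1)) := by
    rw [Set.disjoint_left]
    rintro x ⟨hxf, t, ht, hxt⟩ ⟨-, s, hs, hxs⟩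
    have hxΩ : x ∈ Ω := by
      have := hΩc hxt hxs (a := s / (s + t)) (b := t / (s + t)) (by positivity) (by positivity)
        (by field_simp)
      convert this using 1
      have h1 : x = (s / (s + t) + t / (s + t)) • x := by
        rw [← add_div, div_self (by positivity), one_smul]
      have h2 : (s / (s + t) * t - t / (s + t) * s) • e = 0 := by
        rw [show s / (s + t) * t - t / (s + t) * s = 0 by ring, zero_smul]
      nth_rewrite 1 [h1]
      simp only [smul_sub, add_smul, sub_smul, smul_smul] at h2 ⊢
      rw [sub_eq_zero] at h2
      simp only [one_mul, neg_mul, mul_neg, neg_smul, h2]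
      abel
    rw [hΩo.frontier_eq] at hxf
    exact hxf.2 hxΩ
  calc 2 * volume (dropCoord j '' Ω) ≤
        κ * μH[(m : ℝ)] (frontier Ω ∩ V 1) + κ * μH[(m : ℝ)] (frontier Ω ∩ V (-1)) := by
        rw [two_mul]
        exact add_le_add (hproj 1 one_ne_zero) (hproj (-1) (by norm_num))
    _ = κ * μH[(m : ℝ)] ((frontier Ω ∩ V 1) ∪ (frontier Ω ∩ V (-1))) := by
        rw [← mul_add, measure_union hdisj
          (isClosed_frontier.measurableSet.inter (hVo _).measurableSet)]
    _ ≤ _ := by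
        gcongr
        exact Set.union_subset Set.inter_subset_left Set.inter_subset_left

/-- The case `κ = 1` of the comparison with Hausdorff measure: projecting along an axis does not
increase distances, even to the sup norm, for which Hausdorff and Lebesgue measure agree. -/
lemma volume_dropCoord_image_le {m : ℕ} (j : Fin (m + 1))
    (F : Set (EuclideanSpace ℝ (Fin (m + 1)))) :
    volume (dropCoord j '' F) ≤ 1 * μH[(m : ℝ)] F := by
  have hL : LipschitzWith 1 (dropCoord j) := by
    refine LipschitzWith.of_dist_le_mul fun x y => ?_
    rw [NNReal.coe_one, one_mul, dist_pi_le_iff dist_nonneg]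
    intro i
    simp only [dropCoord_apply]
    exact (PiLp.lipschitzWith_ofLp 2 (fun _ : Fin (m + 1) => ℝ)).dist_le_mul x y |>.trans'
      (dist_le_pi_dist x.ofLp y.ofLp _) |>.trans (by simp)
  have h := hL.hausdorffMeasure_image_le (d := (m : ℝ)) (Nat.cast_nonneg m) F
  have h2 : (μH[(m : ℝ)] : Measure (Fin m → ℝ)) = volume := by
    have := hausdorffMeasure_pi_real (ι := Fin m)
    rwa [Fintype.card_fin] at this
  rw [h2] at h
  simpa using h

/-- The ratio of Euclidean volume to the Hausdorff measure built from `diam ^ m` is at most the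
volume of the unit ball, since a set of diameter `r` lies in a ball of radius `r`. -/
lemma volume_le_ball_mul_hausdorff {m : ℕ} (hm : 0 < m) (S : Set (EuclideanSpace ℝ (Fin m))) :
    volume S ≤ ENNReal.ofReal (√Real.pi ^ m / Real.Gamma (m / 2 + 1)) * μH[(m : ℝ)] S := by
  have : Nonempty (Fin m) := ⟨⟨0, hm⟩⟩
  set κ := ENNReal.ofReal (√Real.pi ^ m / Real.Gamma (m / 2 + 1)) with hκ
  have hκ0 : κ ≠ 0 := by
    have := Real.Gamma_pos_of_pos (s := (m : ℝ) / 2 + 1) (by positivity)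
    simp only [hκ, ne_eq, ENNReal.ofReal_eq_zero, not_le]
    positivity
  have hκt : κ ≠ ⊤ := ENNReal.ofReal_ne_top
  have h : κ⁻¹ • (volume : Measure (EuclideanSpace ℝ (Fin m))) ≤ μH[(m : ℝ)] := by
    refine Measure.le_hausdorffMeasure _ _ 1 one_pos fun s hs => ?_
    have hst : Metric.ediam s ≠ ⊤ := ne_top_of_le_ne_top ENNReal.one_ne_top hs
    rcases s.eq_empty_or_nonempty with rfl | ⟨x, hx⟩
    · simp
    have hsub : s ⊆ Metric.closedBall x (Metric.ediam s).toReal := by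
      intro y hy
      rw [Metric.mem_closedBall, dist_edist]
      exact ENNReal.toReal_mono hst (Metric.edist_le_ediam_of_mem hy hx)
    rw [Measure.smul_apply, smul_eq_mul]
    calc κ⁻¹ * volume s ≤ κ⁻¹ * volume (Metric.closedBall x (Metric.ediam s).toReal) := by
          gcongr
      _ = Metric.ediam s ^ (m : ℝ) := by
          rw [EuclideanSpace.volume_closedBall, ENNReal.ofReal_toReal hst, Fintype.card_fin, ← hκ,
            mul_comm _ κ, ← mul_assoc, ENNReal.inv_mul_cancel hκ0 hκt, one_mul,
            ENNReal.rpow_natCast]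
  calc volume S = κ * (κ⁻¹ * volume S) := by
        rw [← mul_assoc, ENNReal.mul_inv_cancel hκ0 hκt, one_mul]
    _ ≤ _ := by
        gcongr
        exact h S

/-- The case `κ = ω_m` of the comparison with Hausdorff measure. -/
lemma volume_dropCoord_image_le_ball {m : ℕ} (hm : 0 < m) (j : Fin (m + 1))
    (F : Set (EuclideanSpace ℝ (Fin (m + 1)))) :
    volume (dropCoord j '' F) ≤
      ENNReal.ofReal (√Real.pi ^ m / Real.Gamma (m / 2 + 1)) * μH[(m : ℝ)] F := by
  have hL : LipschitzWith 1 fun x : EuclideanSpace ℝ (Fin (m + 1)) =>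
      WithLp.toLp 2 (dropCoord j x) := by
    refine LipschitzWith.of_dist_le_mul fun x y => ?_
    rw [NNReal.coe_one, one_mul, EuclideanSpace.dist_eq, EuclideanSpace.dist_eq]
    refine Real.sqrt_le_sqrt ?_
    rw [Fin.sum_univ_succAbove _ j]
    simp only [dropCoord_apply]
    exact le_add_of_nonneg_left (sq_nonneg _)
  have h := hL.hausdorffMeasure_image_le (d := (m : ℝ)) (Nat.cast_nonneg m) F
  have hpre : dropCoord j '' F =
      (MeasurableEquiv.toLp 2 (Fin m → ℝ)) ⁻¹' ((fun x => WithLp.toLp 2 (dropCoord j x)) '' F) := by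
    ext y
    constructor
    · rintro ⟨x, hx, rfl⟩
      exact ⟨x, hx, rfl⟩
    · rintro ⟨x, hx, hxy⟩
      exact ⟨x, hx, (WithLp.toLp_injective 2) hxy⟩
  have hv : volume (dropCoord j '' F) =
      volume ((fun x => WithLp.toLp 2 (dropCoord j x)) '' F) := by
    rw [hpre]
    exact (show MeasurePreserving (MeasurableEquiv.toLp 2 (Fin m → ℝ)) volume volume from
      PiLp.volume_preserving_toLp (Fin m)).measure_preimage_equiv _
  rw [hv]
  refine (volume_le_ball_mul_hausdorff hm _).trans ?_
  gcongr
  simpa using h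

/-! ### Finiteness of the boundary measure -/

/-- Radial normalisation by a Lipschitz function is Lipschitz on bounded sets where this function
stays away from zero. -/
lemma lipschitzOnWith_inv_smul {E : Type*} [NormedAddCommGroup E] [NormedSpace ℝ E] {g : E → ℝ}
    {K : NNReal} (hg : LipschitzWith K g) {S : Set E} {c C : ℝ} (hc : 0 < c)
    (hgc : ∀ z ∈ S, c ≤ g z) (hC : ∀ z ∈ S, ‖z‖ ≤ C) :
    ∃ L : NNReal, LipschitzOnWith L (fun z => (g z)⁻¹ • z) S := by
  refine ⟨(c⁻¹ + c⁻¹ * c⁻¹ * K * C).toNNReal, LipschitzOnWith.of_dist_le_mul fun z hz w hw => ?_⟩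
  have hgz := hc.trans_le (hgc z hz)
  have hgw := hc.trans_le (hgc w hw)
  have hC0 : 0 ≤ C := (norm_nonneg z).trans (hC z hz)
  have h1 : (g z)⁻¹ • z - (g w)⁻¹ • w =
      (g z)⁻¹ • (z - w) + ((g z)⁻¹ * (g w)⁻¹ * (g w - g z)) • w := by
    have : (g z)⁻¹ * (g w)⁻¹ * (g w - g z) = (g z)⁻¹ - (g w)⁻¹ := by field_simp
    rw [this, smul_sub, sub_smul]
    abel
  have hgl : |g w - g z| ≤ K * ‖z - w‖ := by
    have := hg.dist_le_mul w z
    rwa [Real.dist_eq, dist_comm, dist_eq_norm] at this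
  have hiz : (g z)⁻¹ ≤ c⁻¹ := inv_anti₀ hc (hgc z hz)
  have hiw : (g w)⁻¹ ≤ c⁻¹ := inv_anti₀ hc (hgc w hw)
  rw [Real.coe_toNNReal _ (by positivity), dist_eq_norm, dist_eq_norm, h1]
  calc ‖(g z)⁻¹ • (z - w) + ((g z)⁻¹ * (g w)⁻¹ * (g w - g z)) • w‖
      ≤ (g z)⁻¹ * ‖z - w‖ + (g z)⁻¹ * (g w)⁻¹ * |g w - g z| * ‖w‖ := by
        refine (norm_add_le _ _).trans ?_
        rw [norm_smul, norm_smul, Real.norm_eq_abs, Real.norm_eq_abs, abs_mul, abs_mul,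
          abs_of_pos (inv_pos.mpr hgz), abs_of_pos (inv_pos.mpr hgw)]
    _ ≤ c⁻¹ * ‖z - w‖ + c⁻¹ * c⁻¹ * (K * ‖z - w‖) * C := by
        gcongr
        exact hC w hw
    _ = _ := by ring

/-- The boundary of the sup-norm unit ball in `ℝ^(m+1)` consists of `2 (m + 1)` faces, hence has
finite `m`-dimensional Hausdorff measure. -/
lemma hausdorffMeasure_cube_boundary_lt_top (m : ℕ) :
    μH[(m : ℝ)] {z : EuclideanSpace ℝ (Fin (m + 1)) | ‖z.ofLp‖ = 1} < ⊤ := by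
  set face : Fin (m + 1) × Bool → (Fin m → ℝ) → EuclideanSpace ℝ (Fin (m + 1)) := fun q w =>
    WithLp.toLp 2 (Fin.insertNth (α := fun _ => ℝ) q.1 (if q.2 then 1 else -1) w) with hface
  have hsub : {z : EuclideanSpace ℝ (Fin (m + 1)) | ‖z.ofLp‖ = 1} ⊆
      ⋃ q, face q '' (Metric.closedBall 0 1) := by
    intro z hz
    obtain ⟨j, hjmax⟩ := Finite.exists_max fun k => |z k|
    have hj : |z j| = 1 := by
      rw [← Set.mem_ofPred_eq.mp hz]
      exact le_antisymm (norm_le_pi_norm z.ofLp j)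
        ((pi_norm_le_iff_of_nonneg (abs_nonneg _)).mpr hjmax)
    refine Set.mem_iUnion.mpr ⟨(j, decide (0 ≤ z j)), dropCoord j z, ?_, ?_⟩
    · rw [mem_closedBall_zero_iff, pi_norm_le_iff_of_nonneg zero_le_one]
      intro i
      exact (norm_le_pi_norm z.ofLp (j.succAbove i)).trans_eq hz
    · ext k
      rcases Fin.eq_self_or_eq_succAbove j k with rfl | ⟨i, rfl⟩
      · by_cases h0 : 0 ≤ z k
        · simp [hface, h0, ← hj, abs_of_nonneg h0]
        · simp [hface, h0, ← hj, abs_of_neg (not_le.mp h0)]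
      · simp [hface, dropCoord_apply]
  have hfin : ∀ q, μH[(m : ℝ)] (face q '' (Metric.closedBall 0 1)) < ⊤ := by
    intro q
    have hL1 : LipschitzWith 1 fun w : Fin m → ℝ =>
        Fin.insertNth (α := fun _ => ℝ) q.1 (if q.2 then 1 else -1) w := by
      refine LipschitzWith.of_dist_le_mul fun x y => ?_
      rw [NNReal.coe_one, one_mul, dist_pi_le_iff dist_nonneg]
      intro k
      rcases Fin.eq_self_or_eq_succAbove q.1 k with rfl | ⟨i, rfl⟩
      · simp
      · simpa using dist_le_pi_dist x y i
    have hL := (PiLp.lipschitzWith_toLp 2 (fun _ : Fin (m + 1) => ℝ)).comp hL1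
    have h := hL.hausdorffMeasure_image_le (d := (m : ℝ)) (Nat.cast_nonneg m)
      (Metric.closedBall 0 1)
    have h2 : (μH[(m : ℝ)] : Measure (Fin m → ℝ)) = volume := by
      have := hausdorffMeasure_pi_real (ι := Fin m)
      rwa [Fintype.card_fin] at this
    rw [h2] at h
    refine h.trans_lt (ENNReal.mul_lt_top ?_ ?_)
    · exact ENNReal.rpow_lt_top_of_nonneg (Nat.cast_nonneg m) ENNReal.coe_ne_top
    · exact measure_closedBall_lt_top
  refine (measure_mono hsub).trans_lt ((measure_iUnion_le _).trans_lt ?_)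
  rw [tsum_fintype]
  exact ENNReal.sum_lt_top.mpr fun q _ => hfin q

/-- The boundary of a bounded convex open set has finite `m`-dimensional Hausdorff measure: it is
the Lipschitz image of the boundary of a cube under the radial projection `z ↦ z / gauge z`. -/
lemma hausdorffMeasure_frontier_lt_top {m : ℕ} {Ω : Set (EuclideanSpace ℝ (Fin (m + 1)))}
    (hΩo : IsOpen Ω) (hΩc : Convex ℝ Ω) (hΩb : Bornology.IsBounded Ω) :
    μH[(m : ℝ)] (frontier Ω) < ⊤ := by
  rcases Ω.eq_empty_or_nonempty with rfl | ⟨x₀, hx₀⟩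
  · simp
  -- it suffices to treat a set containing the origin
  wlog h0 : x₀ = 0 generalizing Ω x₀
  · have h := this (Ω := (fun x => x₀ + x) ⁻¹' Ω) (hΩo.preimage (continuous_const.add continuous_id))
      (hΩc.translate_preimage_right x₀) ?_ 0 (by simpa using hx₀) rfl
    · rw [show (fun x => x₀ + x) ⁻¹' Ω = (IsometryEquiv.addLeft x₀).toHomeomorph ⁻¹' Ω from rfl,
        ← Homeomorph.preimage_frontier] at h
      rwa [show (IsometryEquiv.addLeft x₀).toHomeomorph ⁻¹' frontier Ω =
        (IsometryEquiv.addLeft x₀) ⁻¹' frontier Ω from rfl,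
        IsometryEquiv.hausdorffMeasure_preimage] at h
    · exact (IsometryEquiv.addLeft x₀).isometry.antilipschitz.isBounded_preimage hΩb
  subst h0
  have hn : Ω ∈ 𝓝 (0 : EuclideanSpace ℝ (Fin (m + 1))) := hΩo.mem_nhds hx₀
  obtain ⟨K, hK⟩ := hΩc.lipschitz_gauge hn
  obtain ⟨R, hR0, hR⟩ := hΩb.subset_closedBall_lt 0 0
  have hnorm : ∀ z : EuclideanSpace ℝ (Fin (m + 1)), ‖z.ofLp‖ ≤ ‖z‖ := fun z => by
    rw [pi_norm_le_iff_of_nonneg (norm_nonneg z)]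
    exact PiLp.norm_apply_le z
  have hlow : ∀ z ∈ {z : EuclideanSpace ℝ (Fin (m + 1)) | ‖z.ofLp‖ = 1}, 1 / R ≤ gauge Ω z := by
    intro z hz
    refine le_trans ?_ (le_gauge_of_subset_closedBall (absorbent_nhds_zero hn) hR0.le hR)
    gcongr
    exact (Set.mem_ofPred_eq.mp hz).symm.le.trans (hnorm z)
  have hup : ∀ z ∈ {z : EuclideanSpace ℝ (Fin (m + 1)) | ‖z.ofLp‖ = 1}, ‖z‖ ≤ √(m + 1) := by
    intro z hz
    rw [EuclideanSpace.norm_eq]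
    refine Real.sqrt_le_sqrt ?_
    calc ∑ i, ‖z i‖ ^ 2 ≤ ∑ i : Fin (m + 1), (1 : ℝ) := by
          refine Finset.sum_le_sum fun i _ => ?_
          have : ‖z i‖ ≤ 1 := (norm_le_pi_norm z.ofLp i).trans_eq hz
          exact pow_le_one₀ (norm_nonneg _) this
      _ = _ := by simp
  obtain ⟨L, hL⟩ := lipschitzOnWith_inv_smul hK (by positivity) hlow hup
  have hsub : frontier Ω ⊆ (fun z => (gauge Ω z)⁻¹ • z) ''
      {z : EuclideanSpace ℝ (Fin (m + 1)) | ‖z.ofLp‖ = 1} := by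
    intro x hx
    have hg : gauge Ω x = 1 := (gauge_eq_one_iff_mem_frontier hΩc hn).mpr hx
    have hx0 : x.ofLp ≠ 0 := by
      intro h
      have : x = 0 := by ext j; simp [h]
      simp [this] at hg
    have hs : 0 < ‖x.ofLp‖ := norm_pos_iff.mpr hx0
    refine ⟨‖x.ofLp‖⁻¹ • x, ?_, ?_⟩
    · rw [Set.mem_ofPred_eq, WithLp.ofLp_smul, norm_smul, norm_inv, norm_norm,
        inv_mul_cancel₀ hs.ne']
    · simp only
      rw [gauge_smul_of_nonneg (inv_nonneg.mpr hs.le), hg, smul_eq_mul, mul_one, inv_inv,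
        smul_smul, mul_inv_cancel₀ hs.ne', one_smul]
  refine (measure_mono hsub).trans_lt ((hL.hausdorffMeasure_image_le
    (Nat.cast_nonneg m)).trans_lt (ENNReal.mul_lt_top ?_
      (hausdorffMeasure_cube_boundary_lt_top m)))
  exact ENNReal.rpow_lt_top_of_nonneg (Nat.cast_nonneg m) ENNReal.coe_ne_top

/-! ### The volume of the unit ball in high dimension -/

/-- Two-step recursion for the volume `√π ^ m / Γ (m / 2 + 1)` of the unit ball: the bound `4`
propagates because the ratio of consecutive terms of the same parity is `2 π / (m + 2)`. -/
lemma sqrt_mul_ball_le_step {m : ℕ} (hm : 16 ≤ m)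
    (h : √(m + 1 : ℝ) * (√Real.pi ^ m / Real.Gamma (m / 2 + 1)) ≤ 4) :
    √((m + 2 : ℕ) + 1 : ℝ) * (√Real.pi ^ (m + 2) / Real.Gamma ((m + 2 : ℕ) / 2 + 1)) ≤ 4 := by
  have hm' : (16 : ℝ) ≤ m := by exact_mod_cast hm
  have hG := Real.Gamma_pos_of_pos (s := (m : ℝ) / 2 + 1) (by positivity)
  have e1 : ((m + 2 : ℕ) : ℝ) / 2 + 1 = ((m : ℝ) / 2 + 1) + 1 := by push_cast; ring
  rw [e1, Real.Gamma_add_one (by positivity), pow_add, Real.sq_sqrt Real.pi_pos.le]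
  have e2 : √((m + 2 : ℕ) + 1 : ℝ) ≤ 2 * √(m + 1 : ℝ) := by
    rw [show (2 : ℝ) * √(m + 1 : ℝ) = √(4 * (m + 1)) by
      rw [Real.sqrt_mul (by norm_num), show (4 : ℝ) = 2 ^ 2 by norm_num,
        Real.sqrt_sq (by norm_num)]]
    refine Real.sqrt_le_sqrt ?_
    push_cast
    linarith
  have e3 : Real.pi / ((m : ℝ) / 2 + 1) ≤ 1 / 2 := by
    rw [div_le_div_iff₀ (by positivity) (by norm_num)]
    linarith [Real.pi_lt_four]
  calc √((m + 2 : ℕ) + 1 : ℝ) * (√Real.pi ^ m * Real.pi /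
        (((m : ℝ) / 2 + 1) * Real.Gamma (m / 2 + 1)))
      = √((m + 2 : ℕ) + 1 : ℝ) * (√Real.pi ^ m / Real.Gamma (m / 2 + 1)) *
          (Real.pi / ((m : ℝ) / 2 + 1)) := by field_simp
    _ ≤ 2 * √(m + 1 : ℝ) * (√Real.pi ^ m / Real.Gamma (m / 2 + 1)) * (1 / 2) := by gcongr
    _ = √(m + 1 : ℝ) * (√Real.pi ^ m / Real.Gamma (m / 2 + 1)) := by ring
    _ ≤ 4 := h

lemma pi_pow_eight_lt : Real.pi ^ 8 < 10000 := by
  calc Real.pi ^ 8 < 3.15 ^ 8 := by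
        gcongr
        exact Real.pi_lt_d2
    _ < 10000 := by norm_num

/-- `√d ω_m ≤ 4` for `m = d - 1 ≥ 16`: the cases `m = 16, 17` are numerical, and the induction goes
in steps of two. -/
lemma sqrt_mul_ball_le {m : ℕ} (hm : 16 ≤ m) :
    √(m + 1 : ℝ) * (√Real.pi ^ m / Real.Gamma (m / 2 + 1)) ≤ 4 := by
  induction m using Nat.strong_induction_on with
  | _ m ih =>
    by_cases h18 : 18 ≤ m
    · obtain ⟨k, rfl⟩ : ∃ k, m = k + 2 := ⟨m - 2, by omega⟩
      exact sqrt_mul_ball_le_step (by omega) (ih k (by omega) (by omega))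
    have hpi := pi_pow_eight_lt
    have hp16 : √Real.pi ^ 16 = Real.pi ^ 8 := by
      rw [show 16 = 2 * 8 by norm_num, pow_mul, Real.sq_sqrt Real.pi_pos.le]
    obtain rfl | rfl : m = 16 ∨ m = 17 := by omega
    · have hG : Real.Gamma ((16 : ℕ) / 2 + 1) = 40320 := by
        rw [show ((16 : ℕ) : ℝ) / 2 + 1 = (8 : ℕ) + 1 by norm_num, Real.Gamma_nat_eq_factorial]
        norm_num [Nat.factorial]
      have hs : √((16 : ℕ) + 1 : ℝ) ≤ 5 := by
        rw [Real.sqrt_le_left (by norm_num)]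
        norm_num
      rw [hG, hp16]
      calc √((16 : ℕ) + 1 : ℝ) * (Real.pi ^ 8 / 40320) ≤ 5 * (10000 / 40320) := by gcongr
        _ ≤ 4 := by norm_num
    · have hG : Real.Gamma ((17 : ℕ) / 2 + 1) = 34459425 / 512 * √Real.pi := by
        rw [show ((17 : ℕ) : ℝ) / 2 + 1 = (9 : ℕ) + 1 / 2 by norm_num,
          Real.Gamma_nat_add_half]
        norm_num [Nat.doubleFactorial]
        try ring
      have hs : √((17 : ℕ) + 1 : ℝ) ≤ 5 := by
        rw [Real.sqrt_le_left (by norm_num)]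
        norm_num
      have hq : √Real.pi ≠ 0 := (Real.sqrt_pos.mpr Real.pi_pos).ne'
      rw [hG, show 17 = 16 + 1 by norm_num, pow_succ, hp16, mul_div_mul_right _ _ hq]
      calc √((16 + 1 : ℕ) + 1 : ℝ) * (Real.pi ^ 8 / (34459425 / 512))
          ≤ 5 * (10000 / (34459425 / 512)) := by gcongr
        _ ≤ 4 := by norm_num

/-! ### Packing cubes and counting eigenvalues -/

/-- The sum of the volumes of the `m + 1` coordinate shadows of a bounded convex open set is at
most `2 √(m + 1) |∂Ω|`. -/
lemma sum_volume_shadow_le {m : ℕ} {Ω : Set (EuclideanSpace ℝ (Fin (m + 1)))}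
    (hΩo : IsOpen Ω) (hΩc : Convex ℝ Ω) (hΩb : Bornology.IsBounded Ω) :
    ∑ j : Fin (m + 1), volume (dropCoord j '' Ω) ≤
      ENNReal.ofReal (2 * √(m + 1 : ℝ)) * μH[(m : ℝ)] (frontier Ω) := by
  have hs : 0 < √(m + 1 : ℝ) := Real.sqrt_pos.mpr (by positivity)
  -- the sup-norm comparison is good enough for `m ≤ 15`, the unit ball comparison for `m ≥ 16`
  obtain ⟨κ, hκ4, hκ⟩ : ∃ κ : ℝ, √(m + 1 : ℝ) * κ ≤ 4 ∧
      ∀ j : Fin (m + 1), ∀ F : Set (EuclideanSpace ℝ (Fin (m + 1))),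
        volume (dropCoord j '' F) ≤ ENNReal.ofReal κ * μH[(m : ℝ)] F := by
    by_cases hm : 16 ≤ m
    · exact ⟨_, sqrt_mul_ball_le hm, volume_dropCoord_image_le_ball (by omega)⟩
    · refine ⟨1, ?_, fun j F => by simpa using volume_dropCoord_image_le j F⟩
      rw [mul_one, Real.sqrt_le_left (by norm_num)]
      have : (m : ℝ) ≤ 15 := by exact_mod_cast (by omega : m ≤ 15)
      linarith
  have hj : ∀ j : Fin (m + 1), volume (dropCoord j '' Ω) ≤
      ENNReal.ofReal (2 / √(m + 1 : ℝ)) * μH[(m : ℝ)] (frontier Ω) := by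
    intro j
    have h := two_mul_volume_shadow_le j (hκ j) hΩo hΩc hΩb
    have h4 : ENNReal.ofReal κ ≤ 2 * ENNReal.ofReal (2 / √(m + 1 : ℝ)) := by
      rw [← ENNReal.ofReal_ofNat 2, ← ENNReal.ofReal_mul (by norm_num)]
      refine ENNReal.ofReal_le_ofReal ?_
      rw [← mul_div_assoc, le_div_iff₀ hs]
      linarith
    refine (ENNReal.mul_le_mul_iff_right two_ne_zero ENNReal.ofNat_ne_top).mp (h.trans ?_)
    rw [← mul_assoc]
    gcongr
  calc ∑ j : Fin (m + 1), volume (dropCoord j '' Ω)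
      ≤ ∑ _ : Fin (m + 1), ENNReal.ofReal (2 / √(m + 1 : ℝ)) * μH[(m : ℝ)] (frontier Ω) :=
        Finset.sum_le_sum fun j _ => hj j
    _ = _ := by
        rw [Finset.sum_const, Finset.card_univ, Fintype.card_fin, nsmul_eq_mul, ← mul_assoc,
          ← ENNReal.ofReal_natCast, ← ENNReal.ofReal_mul (by positivity)]
        congr 2
        have := Real.mul_self_sqrt (show (0 : ℝ) ≤ m + 1 by positivity)
        push_cast
        rw [← mul_div_assoc, div_eq_iff hs.ne', mul_assoc, this]
        ring

/-- A grid of side `ℓ` can be placed so that the set `Z` of indices of closed cells contained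
in `Ω` satisfies `|Ω| ≤ ℓ ^ (m + 1) #Z + 2 √(m + 1) ℓ |∂Ω|`. -/
lemma exists_grid {m : ℕ} {ℓ : ℝ} (hℓ : 0 < ℓ) {Ω : Set (EuclideanSpace ℝ (Fin (m + 1)))}
    (hΩo : IsOpen Ω) (hΩc : Convex ℝ Ω) (hΩb : Bornology.IsBounded Ω) :
    ∃ (x₀ : EuclideanSpace ℝ (Fin (m + 1))) (Z : Set (Fin (m + 1) → ℤ)),
      (∀ z ∈ Z, ∀ v : EuclideanSpace ℝ (Fin (m + 1)), (∀ j, v j ∈ Set.Icc 0 ℓ) →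
        x₀ + WithLp.toLp 2 (fun j => ℓ * (z j : ℝ)) + v ∈ Ω) ∧
      volume Ω ≤ ENNReal.ofReal (ℓ ^ (m + 1)) * ((Z.encard : ℕ∞) : ENNReal) +
        ENNReal.ofReal (2 * √(m + 1 : ℝ) * ℓ) * μH[(m : ℝ)] (frontier Ω) := by
  obtain ⟨B, hBΩ, hBo, -, hBv, hvol⟩ := exists_erosion hℓ.le hΩo hΩc Finset.univ
  obtain ⟨x₀, hx₀⟩ := exists_lattice_translate hℓ hBo.measurableSet
    (hΩb.subset hBΩ).measure_lt_top.ne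
  refine ⟨x₀, _, fun z hz v hv => hBv _ hz v (fun j _ => hv j) (by simp), hvol.trans ?_⟩
  refine add_le_add hx₀ ?_
  calc ENNReal.ofReal ℓ * ∑ j : Fin (m + 1), volume (dropCoord j '' Ω)
      ≤ ENNReal.ofReal ℓ * (ENNReal.ofReal (2 * √(m + 1 : ℝ)) * μH[(m : ℝ)] (frontier Ω)) := by
        gcongr
        exact sum_volume_shadow_le hΩo hΩc hΩb
    _ = _ := by
        rw [← mul_assoc, ← ENNReal.ofReal_mul hℓ.le, mul_comm ℓ]

/-- Each admissible cell of the grid contributes `n` eigenvalues below `α`, provided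
`λ*ₙ / ℓ² < α`. -/
lemma grid_le_encard {d n : ℕ} (hd : 1 ≤ d) (hn : 1 ≤ n) {Ω : Set (EuclideanSpace ℝ (Fin d))}
    {ℓ α : ℝ} (hℓ : 0 < ℓ) (hα : cubeDirichletEig d n < α * ℓ ^ 2)
    {x₀ : EuclideanSpace ℝ (Fin d)} (F : Finset (Fin d → ℤ))
    (hF : ∀ z ∈ F, ∀ v : EuclideanSpace ℝ (Fin d), (∀ j, v j ∈ Set.Icc 0 ℓ) →
        x₀ + WithLp.toLp 2 (fun j => ℓ * (z j : ℝ)) + v ∈ Ω) :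
    ((n * F.card : ℕ) : ℕ∞) ≤ {k : ℕ | 1 ≤ k ∧ dirichletEig d k Ω < α}.encard := by
  obtain ⟨hpos, hmodes⟩ := exists_cube_modes hd hn
  obtain ⟨β, hβ1, hβ2⟩ := exists_between hα
  obtain ⟨mm, hinj, hmpos, hmβ⟩ := hmodes β hβ1
  obtain ⟨W, hW, hWR⟩ := exists_unit_family mm hinj hmpos hmβ
  have hcoord : ∀ (z : Fin d → ℤ) (x : EuclideanSpace ℝ (Fin d)) (j : Fin d),
      (ℓ⁻¹ • (x - (x₀ + WithLp.toLp 2 (fun j => ℓ * (z j : ℝ))))) j = (x j - x₀ j) / ℓ - z j := by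
    intro z x j
    simp only [PiLp.smul_apply, PiLp.sub_apply, PiLp.add_apply, smul_eq_mul]
    field_simp
    ring
  have h := cubes_le_encard (Ω := Ω) (α := α) hℓ (hpos.trans hβ1.le)
    (by rwa [div_lt_iff₀ (by positivity)]) W hW hWR (Z := F)
    (fun z => x₀ + WithLp.toLp 2 (fun j => ℓ * (z.1 j : ℝ))) ?_ ?_
  · rwa [Fintype.card_coe] at h
  · intro z z' x h1 h2
    ext j
    have h1j := h1 j
    have h2j := h2 j
    rw [hcoord, Set.mem_Ioo] at h1j h2j
    have a1 : (z.1 j : ℝ) < z'.1 j + 1 := by linarith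
    have a2 : (z'.1 j : ℝ) < z.1 j + 1 := by linarith
    norm_cast at a1 a2
    omega
  · intro z x hx
    have := hF z.1 z.2 (x - (x₀ + WithLp.toLp 2 (fun j => ℓ * (z.1 j : ℝ)))) fun j => ?_
    · simpa using this
    · have hxj := hx j
      rw [PiLp.smul_apply, smul_eq_mul, Set.mem_Ioo, inv_mul_lt_iff₀ hℓ, mul_one] at hxj
      exact ⟨(pos_of_mul_pos_right hxj.1 (inv_nonneg.mpr hℓ.le)).le, hxj.2.le⟩

lemma sqrt_div_pow_eq {a b : ℝ} (ha : 0 < a) (hb : 0 < b) (k : ℕ) :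
    √(a / b) ^ k = a ^ ((k : ℝ) / 2) / b ^ ((k : ℝ) / 2) := by
  rw [Real.sqrt_eq_rpow, ← Real.rpow_natCast, ← Real.rpow_mul (by positivity),
    Real.div_rpow ha.le hb.le, show (1 / 2 : ℝ) * k = k / 2 by ring]

theorem statement_12 (d : ℕ) (hd : 2 ≤ d) (n : ℕ) (hn : 1 ≤ n)
    (Ω : Set (EuclideanSpace ℝ (Fin d)))
    (hΩo : IsOpen Ω) (hΩc : Convex ℝ Ω) (hΩb : Bornology.IsBounded Ω)
    (α : ℝ) (hα : 0 < α) :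
    ENNReal.ofReal
      ((n : ℝ) * (volume Ω).toReal / (cubeDirichletEig d n + (n : ℝ)⁻¹) ^ ((d : ℝ) / 2) *
        α ^ ((d : ℝ) / 2) -
      2 * (n : ℝ) * Real.sqrt d * (μH[(d : ℝ) - 1] (frontier Ω)).toReal /
        (cubeDirichletEig d n + (n : ℝ)⁻¹) ^ (((d : ℝ) - 1) / 2) *
        α ^ (((d : ℝ) - 1) / 2)) ≤
    {k : ℕ | 1 ≤ k ∧ dirichletEig d k Ω < α}.encard := by
  obtain ⟨m, rfl⟩ : ∃ m, d = m + 1 := ⟨d - 1, by omega⟩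
  have hdm : ((m + 1 : ℕ) : ℝ) - 1 = m := by push_cast; ring
  have hn0 : (0 : ℝ) < n := by exact_mod_cast hn
  have hl0 : 0 ≤ cubeDirichletEig (m + 1) n := (exists_cube_modes (by omega) hn).1
  have hΛl : cubeDirichletEig (m + 1) n < cubeDirichletEig (m + 1) n + (n : ℝ)⁻¹ :=
    lt_add_of_pos_right _ (inv_pos.mpr hn0)
  rw [hdm]
  generalize cubeDirichletEig (m + 1) n + (n : ℝ)⁻¹ = Λ at hΛl ⊢
  have hΛ : 0 < Λ := hl0.trans_lt hΛl
  -- the side length for which the mode bound `Λ / ℓ²` equals `α`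
  set ℓ := √(Λ / α) with hℓdef
  have hℓ : 0 < ℓ := Real.sqrt_pos.mpr (by positivity)
  have hℓ2 : α * ℓ ^ 2 = Λ := by
    rw [hℓdef, Real.sq_sqrt (by positivity)]
    field_simp
  obtain ⟨x₀, Z, hZ, hvol⟩ := exists_grid hℓ hΩo hΩc hΩb
  have hfin : ∀ F : Finset (Fin (m + 1) → ℤ), (F : Set _) ⊆ Z →
      ((n * F.card : ℕ) : ℕ∞) ≤ {k : ℕ | 1 ≤ k ∧ dirichletEig (m + 1) k Ω < α}.encard :=
    fun F hFZ => grid_le_encard (by omega) hn hℓ (hℓ2 ▸ hΛl) F fun z hz => hZ z (hFZ hz)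
  by_cases hZf : Z.Finite
  swap
  · have htop : {k : ℕ | 1 ≤ k ∧ dirichletEig (m + 1) k Ω < α}.encard = ⊤ := by
      refine ENat.eq_top_iff_forall_ge.mpr fun N => ?_
      obtain ⟨F, hFZ, hFN⟩ := Set.Infinite.exists_subset_card_eq hZf N
      refine le_trans ?_ (hfin F hFZ)
      rw [hFN]
      exact_mod_cast Nat.le_mul_of_pos_left N hn
    rw [htop]
    simp
  lift Z to Finset (Fin (m + 1) → ℤ) using hZf
  have hmain := hfin Z subset_rfl
  have hHfin : μH[(m : ℝ)] (frontier Ω) ≠ ⊤ := (hausdorffMeasure_frontier_lt_top hΩo hΩc hΩb).ne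
  have hV : (volume Ω).toReal ≤ ℓ ^ (m + 1) * Z.card +
      2 * √(m + 1 : ℝ) * ℓ * (μH[(m : ℝ)] (frontier Ω)).toReal := by
    have h1 : ENNReal.ofReal (ℓ ^ (m + 1)) * (((Z : Set (Fin (m + 1) → ℤ)).encard : ℕ∞) : ENNReal) ≠
        ⊤ := by
      rw [Set.encard_coe_eq_coe_finsetCard]
      exact ENNReal.mul_ne_top ENNReal.ofReal_ne_top (by simp)
    have h2 := ENNReal.mul_ne_top (ENNReal.ofReal_ne_top (r := 2 * √(m + 1 : ℝ) * ℓ)) hHfin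
    have := ENNReal.toReal_mono (ENNReal.add_ne_top.mpr ⟨h1, h2⟩) hvol
    rw [ENNReal.toReal_add h1 h2, ENNReal.toReal_mul, ENNReal.toReal_mul,
      ENNReal.toReal_ofReal (by positivity), ENNReal.toReal_ofReal (by positivity),
      Set.encard_coe_eq_coe_finsetCard] at this
    simpa using this
  have hp1 := sqrt_div_pow_eq hΛ hα (m + 1)
  have hp2 := sqrt_div_pow_eq hΛ hα m
  rw [← hℓdef] at hp1 hp2
  have hΛp : ∀ s : ℝ, 0 < Λ ^ s := fun s => Real.rpow_pos_of_pos hΛ s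
  have hαp : ∀ s : ℝ, 0 < α ^ s := fun s => Real.rpow_pos_of_pos hα s
  have hreal : (n : ℝ) * (volume Ω).toReal / Λ ^ (((m + 1 : ℕ) : ℝ) / 2) *
        α ^ (((m + 1 : ℕ) : ℝ) / 2) -
      2 * (n : ℝ) * √((m + 1 : ℕ) : ℝ) * (μH[(m : ℝ)] (frontier Ω)).toReal /
        Λ ^ ((m : ℝ) / 2) * α ^ ((m : ℝ) / 2) ≤ ((n * Z.card : ℕ) : ℝ) := by
    have e1 : (n : ℝ) * (volume Ω).toReal / Λ ^ (((m + 1 : ℕ) : ℝ) / 2) *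
        α ^ (((m + 1 : ℕ) : ℝ) / 2) = n * (volume Ω).toReal / ℓ ^ (m + 1) := by
      rw [hp1]
      have := hΛp (((m + 1 : ℕ) : ℝ) / 2)
      have := hαp (((m + 1 : ℕ) : ℝ) / 2)
      field_simp
    have e2 : 2 * (n : ℝ) * √((m + 1 : ℕ) : ℝ) * (μH[(m : ℝ)] (frontier Ω)).toReal /
        Λ ^ ((m : ℝ) / 2) * α ^ ((m : ℝ) / 2) =
        2 * n * √((m + 1 : ℕ) : ℝ) * (μH[(m : ℝ)] (frontier Ω)).toReal / ℓ ^ m := by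
      rw [hp2]
      have := hΛp ((m : ℝ) / 2)
      have := hαp ((m : ℝ) / 2)
      field_simp
    have e3 : 2 * n * √((m + 1 : ℕ) : ℝ) * (μH[(m : ℝ)] (frontier Ω)).toReal / ℓ ^ m =
        n * (2 * √(m + 1 : ℝ) * ℓ * (μH[(m : ℝ)] (frontier Ω)).toReal) / ℓ ^ (m + 1) := by
      rw [pow_succ]
      push_cast
      field_simp
    rw [e1, e2, e3, ← sub_div, div_le_iff₀ (by positivity)]
    push_cast
    nlinarith [mul_le_mul_of_nonneg_left hV hn0.le]
  calc _ ≤ ENNReal.ofReal ((n * Z.card : ℕ) : ℝ) := ENNReal.ofReal_le_ofReal hreal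
    _ = (((n * Z.card : ℕ) : ℕ∞) : ENNReal) := by
        rw [ENNReal.ofReal_natCast]
        rfl
    _ ≤ _ := ENat.toENNReal_le.mpr hmain
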